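/- arXiv:1801.06949 — 7 statements merged into one kernel-verified Lean document; each statement's English description precedes it below -/
import Mathlib

section
/- Let X = {0,1}^ℕ be the Cantor space. For every clopen subset V of X with V ≠ ∅ and V ≠ X, there exists a homeomorphism φ of X such that φ(V) = X \ V. -/
/-!
Every nonempty clopen subset `V` of the Cantor space `X` is homeomorphic to `X`. By compactness
`V` depends only on the first `n` coordinates for some `n` (`exists_finite_dependence`), and
induction on `n` gives a continuous injection `X → X` with range `V`
(`exists_continuous_injective_range`): the two tail sections of `V` over the values of the
zeroth coordinate depend on `n - 1` coordinates, and `X` is homeomorphic to `Bool × X`, so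
parametrizations of the nonempty sections combine to one of `V`.

Given parametrizations `f` of `V` and `g` of `Vᶜ`, the map `Bool × X → X` equal to `f` on one
copy of `X` and to `g` on the other is a continuous bijection from a compact space to a Hausdorff
space, hence a homeomorphism. Conjugating the flip of `Bool` by it gives `φ`.
-/

/-- The sequence `b, y 0, y 1, …`. -/
def cantorCons (b : Bool) (y : ℕ → Bool) : ℕ → Bool
  | 0 => b
  | n + 1 => y n

/-- The shifted sequence `x 1, x 2, …`. -/
def cantorTail (x : ℕ → Bool) : ℕ → Bool := fun n => x (n + 1)

lemma cantorCons_tail (x : ℕ → Bool) : cantorCons (x 0) (cantorTail x) = x := by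
  funext n; cases n <;> rfl

lemma cantorCons_inj {b c : Bool} {y z : ℕ → Bool} (h : cantorCons b y = cantorCons c z) :
    b = c ∧ y = z :=
  ⟨congrFun h 0, funext fun n => congrFun h (n + 1)⟩

lemma continuous_cantorTail : Continuous cantorTail :=
  continuous_pi fun n => continuous_apply (n + 1)

lemma continuous_cantorCons : Continuous fun p : Bool × (ℕ → Bool) => cantorCons p.1 p.2 := by
  refine continuous_pi fun n => ?_
  cases n with
  | zero => exact continuous_fst
  | succ n => exact (continuous_apply n).comp continuous_snd

lemma exists_finite_dependence (V : Set (ℕ → Bool)) (hV : IsClopen V) :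
    ∃ n : ℕ, ∀ x y : ℕ → Bool, (∀ i < n, x i = y i) → (x ∈ V ↔ y ∈ V) := by
  have key : ∀ x : ℕ → Bool, ∃ n, ∀ y ∈ PiNat.cylinder x n, (y ∈ V ↔ x ∈ V) := by
    intro x
    have hU : ∃ U : Set (ℕ → Bool), IsOpen U ∧ x ∈ U ∧ ∀ y ∈ U, (y ∈ V ↔ x ∈ V) := by
      by_cases hx : x ∈ V
      · exact ⟨V, hV.isOpen, hx, fun y hy => by simp [hx, hy]⟩
      · exact ⟨Vᶜ, hV.compl.isOpen, hx, fun y hy => by simpa [hx] using hy⟩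
    obtain ⟨U, hUo, hxU, hU⟩ := hU
    obtain ⟨_, ⟨z, n, rfl⟩, hxz, hsub⟩ :=
      (PiNat.isTopologicalBasis_cylinders (fun _ : ℕ => Bool)).exists_subset_of_mem_open hxU hUo
    rw [← PiNat.mem_cylinder_iff_eq.1 hxz] at hsub
    exact ⟨n, fun y hy => hU y (hsub hy)⟩
  choose N hN using key
  obtain ⟨t, -, ht⟩ := (isCompact_univ (X := ℕ → Bool)).elim_nhds_subcover
    (fun x => PiNat.cylinder x (N x))
    (fun x _ => (PiNat.isOpen_cylinder _ x (N x)).mem_nhds (PiNat.self_mem_cylinder x _))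
  refine ⟨t.sup N, fun x y hxy => ?_⟩
  obtain ⟨z, hz, hxz⟩ := Set.mem_iUnion₂.1 (ht (Set.mem_univ x))
  have hyz : y ∈ PiNat.cylinder z (N z) := fun i hi =>
    (hxy i (hi.trans_le (Finset.le_sup hz))).symm.trans (hxz i hi)
  exact (hN z x hxz).trans (hN z y hyz).symm

/-- A nonempty set depending on finitely many coordinates is a copy of the whole Cantor space. -/
lemma exists_continuous_injective_range (n : ℕ) :
    ∀ V : Set (ℕ → Bool), V.Nonempty →
      (∀ x y : ℕ → Bool, (∀ i < n, x i = y i) → (x ∈ V ↔ y ∈ V)) →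
      ∃ f : (ℕ → Bool) → (ℕ → Bool), Continuous f ∧ Function.Injective f ∧ Set.range f = V := by
  induction n with
  | zero =>
    rintro V ⟨a, ha⟩ hdep
    refine ⟨id, continuous_id, Function.injective_id, ?_⟩
    rw [Set.range_id, eq_comm, Set.eq_univ_iff_forall]
    exact fun x => (hdep x a (by simp)).2 ha
  | succ n ih =>
    intro V hne hdep
    have section_param : ∀ b, (cantorCons b ⁻¹' V).Nonempty →
        ∃ f : (ℕ → Bool) → (ℕ → Bool), Continuous f ∧ Function.Injective f ∧
          Set.range f = cantorCons b ⁻¹' V := by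
      intro b hb
      refine ih _ hb fun x y hxy => hdep _ _ fun i hi => ?_
      cases i with
      | zero => rfl
      | succ i => exact hxy i (by omega)
    by_cases hboth : ∀ b, (cantorCons b ⁻¹' V).Nonempty
    · choose f hfc hfi hfr using fun b => section_param b (hboth b)
      have hF : Continuous fun p : Bool × (ℕ → Bool) => f p.1 p.2 :=
        continuous_prod_of_discrete_left.2 hfc
      refine ⟨fun x => cantorCons (x 0) (f (x 0) (cantorTail x)), ?_, ?_, ?_⟩
      · have h0 : Continuous fun x : ℕ → Bool => x 0 := continuous_apply 0
        exact continuous_cantorCons.comp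
          (h0.prodMk (hF.comp (h0.prodMk continuous_cantorTail)))
      · intro x y hxy
        obtain ⟨h0, h1⟩ := cantorCons_inj hxy
        rw [h0] at h1
        rw [← cantorCons_tail x, ← cantorCons_tail y, h0, hfi _ h1]
      · ext z
        constructor
        · rintro ⟨x, rfl⟩
          exact (hfr (x 0)).subset ⟨_, rfl⟩
        · intro hz
          have hz' : cantorTail z ∈ cantorCons (z 0) ⁻¹' V := by
            rwa [Set.mem_preimage, cantorCons_tail]
          rw [← hfr] at hz'
          obtain ⟨w, hw⟩ := hz'
          refine ⟨cantorCons (z 0) w, ?_⟩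
          change cantorCons (z 0) (f (z 0) w) = z
          rw [hw, cantorCons_tail]
    · push Not at hboth
      obtain ⟨c, hc⟩ := hboth
      -- The section over `c` is empty, so all of `V` lies over `!c`.
      have hV0 : ∀ z ∈ V, z 0 = !c := by
        intro z hz
        rw [Bool.eq_not]
        rintro rfl
        have : cantorTail z ∈ cantorCons (z 0) ⁻¹' V := by
          rwa [Set.mem_preimage, cantorCons_tail]
        simp [hc] at this
      have hmem : ∀ z ∈ V, cantorTail z ∈ cantorCons (!c) ⁻¹' V := by
        intro z hz
        rwa [Set.mem_preimage, ← hV0 z hz, cantorCons_tail]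
      obtain ⟨a, ha⟩ := hne
      obtain ⟨f, hfc, hfi, hfr⟩ := section_param (!c) ⟨_, hmem a ha⟩
      refine ⟨fun x => cantorCons (!c) (f x),
        continuous_cantorCons.comp (continuous_const.prodMk hfc),
        fun x y hxy => hfi (cantorCons_inj hxy).2, ?_⟩
      ext z
      constructor
      · rintro ⟨x, rfl⟩
        exact hfr.subset ⟨x, rfl⟩
      · intro hz
        obtain ⟨w, hw⟩ := hfr.superset (hmem z hz)
        refine ⟨w, ?_⟩
        change cantorCons (!c) (f w) = z
        rw [hw, ← hV0 z hz, cantorCons_tail]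

/-- for every clopen set `V` in the Cantor space `X = {0,1}^ℕ` with
`V ≠ ∅` and `V ≠ X`, there is a homeomorphism `φ` of `X` with `φ(V) = X \ V`. -/
theorem cantor_clopen_swap (V : Set (ℕ → Bool)) (hV : IsClopen V)
    (hne : V.Nonempty) (hproper : V ≠ Set.univ) :
    ∃ φ : (ℕ → Bool) ≃ₜ (ℕ → Bool), φ '' V = Vᶜ := by
  obtain ⟨n, hn⟩ := exists_finite_dependence V hV
  obtain ⟨f, hfc, hfi, hfr⟩ := exists_continuous_injective_range n V hne hn
  obtain ⟨g, hgc, hgi, hgr⟩ := exists_continuous_injective_range n Vᶜ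
    (Set.nonempty_compl.2 hproper) fun x y hxy => not_congr (hn x y hxy)
  have hf : ∀ x, f x ∈ V := fun x => hfr.subset ⟨x, rfl⟩
  have hg : ∀ x, g x ∉ V := fun x => hgr.subset ⟨x, rfl⟩
  let F : Bool × (ℕ → Bool) → (ℕ → Bool) := fun p => cond p.1 (f p.2) (g p.2)
  have hFc : Continuous F := by
    refine continuous_prod_of_discrete_left.2 fun b => ?_
    cases b
    exacts [hgc, hfc]
  have hFb : Function.Bijective F := by
    constructor
    · rintro ⟨_ | _, x⟩ ⟨_ | _, y⟩ hxy
      · exact congrArg _ (hgi hxy)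
      · exact absurd (hf y) ((show g x = f y from hxy) ▸ hg x)
      · exact absurd (hf x) ((show f x = g y from hxy) ▸ hg y)
      · exact congrArg _ (hfi hxy)
    · intro z
      by_cases hz : z ∈ V
      · obtain ⟨w, hw⟩ := hfr.superset hz
        exact ⟨(true, w), hw⟩
      · obtain ⟨w, hw⟩ := hgr.superset hz
        exact ⟨(false, w), hw⟩
  let H : Bool × (ℕ → Bool) ≃ₜ (ℕ → Bool) :=
    Continuous.homeoOfEquivCompactToT2 (f := Equiv.ofBijective F hFb) hFc
  have hHf : ∀ w, H (true, w) = f w := fun _ => rfl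
  have hHg : ∀ w, H (false, w) = g w := fun _ => rfl
  let σ : Bool × (ℕ → Bool) ≃ₜ Bool × (ℕ → Bool) :=
    (Homeomorph.ofDiscrete Equiv.boolNot).prodCongr (Homeomorph.refl _)
  have hφ : ∀ w, (H.symm.trans (σ.trans H)) (f w) = g w := by
    intro w
    rw [← hHf, ← hHg]
    simp [σ, Homeomorph.ofDiscrete]
  refine ⟨H.symm.trans (σ.trans H), ?_⟩
  rw [← hgr]
  nth_rewrite 1 [← hfr]
  rw [← Set.range_comp]
  exact congrArg Set.range (funext hφ)
end

section
/- Let X = {0,1}^ℕ be the Cantor space, let Γ be the free group on the disjoint union S ⊔ T of two disjoint countably infinite sets S and T, and let Γ_S be the subgroup of Γ generated by S. For every nonempty clopen subset V of X, the set of actions {α ∈ 𝒮 : ⋃_{γ ∈ Γ_S} α(γ)(V) = X} (i.e., the Γ_S-saturation of V fulfills X) is an open subset of 𝒮 = Hom(Γ, Homeo(X)). -/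
/-!
A point `x` lies in the `Γ_S`-saturation of `V` under `α` iff `α(γ)⁻¹ x ∈ V` for some `γ ∈ Γ_S`.
As `X` is compact, evaluation `(α, x) ↦ α(γ)⁻¹ x` is jointly continuous, so the set of pairs
`(α, x)` with `x` in the saturation is open in `𝒮 × X`. Since `X` is compact, the tube lemma shows
that the set of `α` for which every `x` has this property is open.
-/

/-- The Cantor space `{0,1}^ℕ`, with its product topology. -/
abbrev CantorSp : Type := ℕ → Bool

/-- The topology of uniform convergence on the homeomorphism group of the Cantor space. -/
instance cantorHomeoTopology : TopologicalSpace (CantorSp ≃ₜ CantorSp) :=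
  TopologicalSpace.induced
    (fun φ => ((φ : C(CantorSp, CantorSp)), (φ.symm : C(CantorSp, CantorSp))))
    inferInstance

/-- Evaluation of the inverse homeomorphism is jointly continuous: the topology on `Homeo(X)`
is induced in part by the compact-open topology on inverses, and `X` is locally compact. -/
theorem continuous_symm_eval :
    Continuous fun p : (CantorSp ≃ₜ CantorSp) × CantorSp => p.1.symm p.2 := by
  have h : Continuous fun φ : CantorSp ≃ₜ CantorSp => (φ.symm : C(CantorSp, CantorSp)) :=
    continuous_snd.comp (continuous_induced_dom (f := fun φ : CantorSp ≃ₜ CantorSp =>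
      ((φ : C(CantorSp, CantorSp)), (φ.symm : C(CantorSp, CantorSp)))))
  exact ContinuousEval.continuous_eval.comp
    ((h.comp continuous_fst).prodMk continuous_snd)

/-- Let `Γ` be the free group on the disjoint union `S ⊔ T` of two disjoint
countably infinite sets, and `Γ_S ≤ Γ` the subgroup generated by `S`.  For every nonempty
clopen `V ⊆ X`, the set of actions `α ∈ 𝒮 = Hom(Γ, Homeo(X))` whose `Γ_S`-saturation of
`V` fulfills `X` is open in `𝒮`. -/
theorem saturation_property_open
    (S T : Type) [Countable S] [Infinite S] [Countable T] [Infinite T]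
    (V : Set CantorSp) (hV : IsClopen V) (hne : V.Nonempty) :
    IsOpen {α : {α : FreeGroup (S ⊕ T) → (CantorSp ≃ₜ CantorSp) //
        ∀ γ γ', α (γ * γ') = (α γ').trans (α γ)} |
      (⋃ γ ∈ Subgroup.closure (Set.range fun s : S => FreeGroup.of (Sum.inl s)),
        (α.1 γ) '' V) = Set.univ} := by
  rw [isOpen_iff_mem_nhds]
  intro α hα
  have key := isCompact_univ.eventually_forall_of_forall_eventually (x₀ := α)
    (P := fun β (x : CantorSp) =>
      ∃ γ ∈ Subgroup.closure (Set.range fun s : S => FreeGroup.of (Sum.inl (β := T) s)),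
        (β.1 γ).symm x ∈ V) (K := Set.univ) (fun x _ => by
      have hx : x ∈ ⋃ γ ∈ Subgroup.closure
          (Set.range fun s : S => FreeGroup.of (Sum.inl (β := T) s)), (α.1 γ) '' V :=
        hα ▸ Set.mem_univ x
      simp only [Set.mem_iUnion] at hx
      obtain ⟨γ, hγ, v, hv, rfl⟩ := hx
      have hg : Continuous fun p : {α : FreeGroup (S ⊕ T) → (CantorSp ≃ₜ CantorSp) //
          ∀ γ γ', α (γ * γ') = (α γ').trans (α γ)} × CantorSp => (p.1.1 γ, p.2) :=
        (((continuous_apply γ).comp continuous_subtype_val).comp continuous_fst).prodMk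
          continuous_snd
      have hc := continuous_symm_eval.comp hg
      have hmem := (hV.isOpen.preimage hc).mem_nhds
        (show (α, α.1 γ v) ∈ _ by simpa using hv)
      filter_upwards [hmem] with p hp
      exact ⟨γ, hγ, hp⟩)
  filter_upwards [key] with β hβ
  refine Set.eq_univ_of_forall fun x => ?_
  obtain ⟨γ, hγ, hx⟩ := hβ x (Set.mem_univ x)
  exact Set.mem_biUnion hγ ⟨_, hx, (β.1 γ).apply_symm_apply x⟩
end

section
/- Let X = {0,1}^ℕ be the Cantor space, let Γ be the free group on the disjoint union S ⊔ T of two disjoint countably infinite sets S and T, and let Γ_S be the subgroup of Γ generated by S. For every clopen subset V of X with V ≠ ∅ and V ≠ X, the set of actions {α ∈ 𝒮 : ⋃_{γ ∈ Γ_S} α(γ)(V) = X} is dense in 𝒮 = Hom(Γ, Homeo(X)). -/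
/-- The involutive homeomorphism of the Cantor space switching the coordinates in `c`. -/
def flipOn (c : Finset ℕ) : CantorSp ≃ₜ CantorSp where
  toFun x i := xor (decide (i ∈ c)) (x i)
  invFun x i := xor (decide (i ∈ c)) (x i)
  left_inv x := by ext i; simp
  right_inv x := by ext i; simp
  continuous_toFun := continuous_pi fun i =>
    (continuous_of_discreteTopology (f := fun b : Bool => xor (decide (i ∈ c)) b)).comp
      (continuous_apply i)
  continuous_invFun := continuous_pi fun i =>
    (continuous_of_discreteTopology (f := fun b : Bool => xor (decide (i ∈ c)) b)).comp
      (continuous_apply i)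

theorem exists_mem_flipOn_image {V : Set CantorSp} (hV : IsOpen V) (hne : V.Nonempty)
    (x : CantorSp) : ∃ c, x ∈ flipOn c '' V := by
  obtain ⟨v, hv⟩ := hne
  obtain ⟨I, u, hu, hsub⟩ := isOpen_pi_iff.1 hV v hv
  refine ⟨I.filter fun i => x i ≠ v i, (flipOn _).symm x, hsub fun i hi => ?_,
    Homeomorph.apply_symm_apply _ x⟩
  -- On the support of the cylinder, the flipped point coincides with `v`.
  have h : (flipOn (I.filter fun i => x i ≠ v i)).symm x i = v i := by
    change xor (decide (i ∈ I.filter fun i => x i ≠ v i)) (x i) = v i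
    have hi' : i ∈ I := hi
    cases hx : x i <;> cases hv : v i <;> simp [hx, hv, hi']
  rw [h]
  exact (hu i hi).2

theorem lift_mk_congr {A G : Type*} [Group G] {f g : A → G} (L : List (A × Bool))
    (h : ∀ p ∈ L, f p.1 = g p.1) :
    FreeGroup.lift f (FreeGroup.mk L) = FreeGroup.lift g (FreeGroup.mk L) := by
  rw [FreeGroup.lift_mk, FreeGroup.lift_mk]
  congr 1
  refine List.map_congr_left fun p hp => ?_
  rw [h p hp]

/-- Let `Γ` be the free group on the disjoint union `S ⊔ T` of two disjoint
countably infinite sets, and `Γ_S ≤ Γ` the subgroup generated by `S`.  For every clopen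
`V ⊆ X` with `V ≠ ∅` and `V ≠ X`, the set of actions `α ∈ 𝒮 = Hom(Γ, Homeo(X))` whose
`Γ_S`-saturation of `V` fulfills `X` is dense in `𝒮`. -/
theorem saturation_property_dense
    (S T : Type) [Countable S] [Infinite S] [Countable T] [Infinite T]
    (V : Set CantorSp) (hV : IsClopen V) (hne : V.Nonempty) (hproper : V ≠ Set.univ) :
    Dense {α : {α : FreeGroup (S ⊕ T) → (CantorSp ≃ₜ CantorSp) //
        ∀ γ γ', α (γ * γ') = (α γ').trans (α γ)} |
      (⋃ γ ∈ Subgroup.closure (Set.range fun s : S => FreeGroup.of (Sum.inl s)),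
        (α.1 γ) '' V) = Set.univ} := by
  classical
  rintro ⟨α, hα⟩
  rw [mem_closure_iff]
  rintro U hU hαU
  obtain ⟨W, hW, rfl⟩ := isOpen_induced_iff.1 hU
  obtain ⟨I, u, hu, hsub⟩ := isOpen_pi_iff.1 hW α hαU
  -- The finitely many generators occurring in the constrained group elements.
  let F : Finset (S ⊕ T) := I.biUnion fun γ => (γ.toWord.map Prod.fst).toFinset
  have hinf : Set.Infinite {s : S | Sum.inl s ∉ F} := by
    have : Set.Finite {s : S | Sum.inl s ∈ F} :=
      F.finite_toSet.preimage Sum.inl_injective.injOn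
    exact this.infinite_compl
  have := hinf.to_subtype
  obtain ⟨e⟩ : Nonempty (Finset ℕ ↪ {s : S | Sum.inl s ∉ F}) :=
    ⟨(Encodable.encode' (Finset ℕ)).trans (Infinite.natEmbedding _)⟩
  let a : FreeGroup (S ⊕ T) →* (CantorSp ≃ₜ CantorSp) := MonoidHom.mk' α hα
  let f : S ⊕ T → (CantorSp ≃ₜ CantorSp) := fun g =>
    if h : ∃ c, g = Sum.inl (e c : S) then flipOn h.choose else α (FreeGroup.of g)
  have hf : ∀ c, f (Sum.inl (e c : S)) = flipOn c := by
    intro c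
    have h : ∃ c', (Sum.inl (e c : S) : S ⊕ T) = Sum.inl (e c' : S) := ⟨c, rfl⟩
    have h' : c = h.choose := e.injective (Subtype.ext (Sum.inl_injective h.choose_spec))
    simp only [f, dif_pos h, ← h']
  have hfF : ∀ g ∈ F, f g = α (FreeGroup.of g) := by
    intro g hg
    refine dif_neg ?_
    rintro ⟨c, rfl⟩
    exact (e c).2 hg
  have hagree : ∀ γ ∈ I, FreeGroup.lift f γ = α γ := by
    intro γ hγ
    have h1 : FreeGroup.lift (fun g => α (FreeGroup.of g)) = a := by
      ext1 g
      simp [a]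
    change _ = a γ
    rw [← h1, ← FreeGroup.mk_toWord (x := γ)]
    refine lift_mk_congr _ fun p hp => hfF _ ?_
    exact Finset.mem_biUnion.2 ⟨γ, hγ, List.mem_toFinset.2 (List.mem_map_of_mem hp)⟩
  refine ⟨⟨FreeGroup.lift f, fun γ γ' => map_mul _ γ γ'⟩, hsub fun γ hγ => ?_, ?_⟩
  · change FreeGroup.lift f γ ∈ u γ
    rw [hagree γ hγ]
    exact (hu γ hγ).2
  · refine Set.eq_univ_of_forall fun x => ?_
    obtain ⟨c, hc⟩ := exists_mem_flipOn_image hV.isOpen hne x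
    refine Set.mem_iUnion₂.2 ⟨FreeGroup.of (Sum.inl (e c : S)),
      Subgroup.subset_closure ⟨_, rfl⟩, ?_⟩
    change x ∈ (FreeGroup.lift f (FreeGroup.of (Sum.inl (e c : S)))) '' V
    rw [FreeGroup.lift_apply_of, hf]
    exact hc
end

section
/- Let X = {0,1}^ℕ be the Cantor space, let Γ be the free group on the disjoint union S ⊔ T of two disjoint countably infinite sets S and T, and let Γ_S be the subgroup of Γ generated by S. The set of actions {α ∈ 𝒮 : the restriction of α to Γ_S is minimal} is a dense G_δ subset of 𝒮 = Hom(Γ, Homeo(X)), i.e., it contains/equals a countable intersection of open sets and is dense in 𝒮. -/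
open Topology Filter

/-- The homeomorphism of the Cantor space flipping the `n`-th coordinate. -/
def flipCoord (n : ℕ) : CantorSp ≃ₜ CantorSp where
  toFun x := Function.update x n (!x n)
  invFun x := Function.update x n (!x n)
  left_inv x := by simp
  right_inv x := by simp
  continuous_toFun := by fun_prop
  continuous_invFun := by fun_prop

theorem continuous_homeo_eval :
    Continuous fun p : (CantorSp ≃ₜ CantorSp) × CantorSp => p.1 p.2 := by
  have h : Continuous fun φ : CantorSp ≃ₜ CantorSp => (φ : C(CantorSp, CantorSp)) :=
    continuous_fst.comp (continuous_induced_dom (f := fun φ : CantorSp ≃ₜ CantorSp =>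
      ((φ : C(CantorSp, CantorSp)), (φ.symm : C(CantorSp, CantorSp)))))
  have h2 : Continuous fun p : (CantorSp ≃ₜ CantorSp) × CantorSp =>
      (p.1 : C(CantorSp, CantorSp)) p.2 :=
    (h.comp continuous_fst).eval continuous_snd
  exact h2

/-- By compactness of the Cantor space, for a continuous family of homeomorphisms it is an open
condition that every point is sent into the open set `U` by some `α γ` with `γ ∈ H`. -/
theorem isOpen_forall_exists_mem {A G : Type*} [TopologicalSpace A]
    (ev : A → G → (CantorSp ≃ₜ CantorSp)) (hev : ∀ γ, Continuous fun a => ev a γ)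
    (H : Set G) {U : Set CantorSp} (hU : IsOpen U) :
    IsOpen {a : A | ∀ x : CantorSp, ∃ γ ∈ H, ev a γ x ∈ U} := by
  have hW : IsOpen {p : A × CantorSp | ∃ γ ∈ H, ev p.1 γ p.2 ∈ U} := by
    have : {p : A × CantorSp | ∃ γ ∈ H, ev p.1 γ p.2 ∈ U} =
        ⋃ γ ∈ H, (fun p : A × CantorSp => ev p.1 γ p.2) ⁻¹' U := by
      ext p; simp
    rw [this]
    refine isOpen_biUnion fun γ _ => hU.preimage ?_
    exact continuous_homeo_eval.comp (((hev γ).comp continuous_fst).prodMk continuous_snd)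
  have hC := isClosedMap_fst_of_compactSpace (X := A) (Y := CantorSp) _ hW.isClosed_compl
  rw [← isOpen_compl_iff] at hC
  convert hC using 1
  ext a
  simp

/-- A set containing `x` and stable under all coordinate flips is dense: it contains, for every
`y` and `n`, the point agreeing with `y` below `n` and with `x` from `n` on. -/
theorem dense_of_flip_stable {D : Set CantorSp} {x : CantorSp} (hx : x ∈ D)
    (hD : ∀ n, ∀ y ∈ D, flipCoord n y ∈ D) : Dense D := by
  intro y
  have hmem : ∀ n : ℕ, (fun i => if i < n then y i else x i) ∈ D := by
    intro n
    induction n with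
    | zero => simpa using hx
    | succ n ih =>
      by_cases hxy : x n = y n
      · convert ih using 2 with i
        grind
      · convert hD n _ ih using 1
        funext i
        have : y n = !x n := by
          cases h1 : x n <;> cases h2 : y n <;> simp_all
        by_cases hi : i = n
        · subst hi
          simp [flipCoord, this]
        · have : i < n + 1 ↔ i < n := by omega
          simp [flipCoord, hi, this]
  refine mem_closure_of_tendsto (b := atTop)
    (f := fun n : ℕ => fun i => if i < n then y i else x i) ?_ (Eventually.of_forall hmem)
  rw [tendsto_pi_nhds]
  intro i
  refine tendsto_nhds_of_eventually_eq ?_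
  filter_upwards [eventually_gt_atTop i] with n hn
  simp [hn]

/-- The generators with index at least `N` in the enumeration `e` of `S` act by coordinate flips,
all other generators act as prescribed by `α`. -/
def modifiedAction {S T : Type} (e : S ≃ ℕ) (α : FreeGroup (S ⊕ T) →* (CantorSp ≃ₜ CantorSp))
    (N : ℕ) : FreeGroup (S ⊕ T) →* (CantorSp ≃ₜ CantorSp) :=
  FreeGroup.lift (Sum.elim
    (fun s => if e s < N then α (FreeGroup.of (Sum.inl s)) else flipCoord (e s - N))
    (fun t => α (FreeGroup.of (Sum.inr t))))

theorem eventually_modifiedAction_eq {S T : Type} (e : S ≃ ℕ)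
    (α : FreeGroup (S ⊕ T) →* (CantorSp ≃ₜ CantorSp)) (γ : FreeGroup (S ⊕ T)) :
    ∀ᶠ N in atTop, modifiedAction e α N γ = α γ := by
  induction γ using FreeGroup.induction_on with
  | C1 => simp
  | of a =>
    rcases a with s | t
    · filter_upwards [eventually_gt_atTop (e s)] with N hN
      simp [modifiedAction, hN]
    · simp [modifiedAction]
  | inv_of a ih =>
    filter_upwards [ih] with N hN
    rw [map_inv, map_inv, hN]
  | mul a b iha ihb =>
    filter_upwards [iha, ihb] with N ha hb
    rw [map_mul, map_mul, ha, hb]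

/-- Let `Γ` be the free group on the disjoint union `S ⊔ T` of two disjoint
countably infinite sets, and `Γ_S ≤ Γ` the subgroup generated by `S`.  The set of actions
`α ∈ 𝒮 = Hom(Γ, Homeo(X))` whose restriction to `Γ_S` is minimal (every `Γ_S`-orbit is
dense in `X`) is a dense `G_δ` subset of `𝒮`. -/
theorem minimal_restriction_dense_Gdelta
    (S T : Type) [Countable S] [Infinite S] [Countable T] [Infinite T] :
    IsGδ {α : {α : FreeGroup (S ⊕ T) → (CantorSp ≃ₜ CantorSp) //
        ∀ γ γ', α (γ * γ') = (α γ').trans (α γ)} |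
      ∀ x : CantorSp, Dense {y : CantorSp |
        ∃ γ ∈ Subgroup.closure (Set.range fun s : S => FreeGroup.of (Sum.inl s)),
          (α.1 γ) x = y}} ∧
    Dense {α : {α : FreeGroup (S ⊕ T) → (CantorSp ≃ₜ CantorSp) //
        ∀ γ γ', α (γ * γ') = (α γ').trans (α γ)} |
      ∀ x : CantorSp, Dense {y : CantorSp |
        ∃ γ ∈ Subgroup.closure (Set.range fun s : S => FreeGroup.of (Sum.inl s)),
          (α.1 γ) x = y}} := by
  constructor
  · have hset : {α : {α : FreeGroup (S ⊕ T) → (CantorSp ≃ₜ CantorSp) //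
        ∀ γ γ', α (γ * γ') = (α γ').trans (α γ)} |
      ∀ x : CantorSp, Dense {y : CantorSp |
        ∃ γ ∈ Subgroup.closure (Set.range fun s : S => FreeGroup.of (Sum.inl s)),
          (α.1 γ) x = y}} =
      ⋂ U ∈ TopologicalSpace.countableBasis CantorSp,
        {α : {α : FreeGroup (S ⊕ T) → (CantorSp ≃ₜ CantorSp) //
          ∀ γ γ', α (γ * γ') = (α γ').trans (α γ)} |
        ∀ x : CantorSp, ∃ γ ∈ ((Subgroup.closure (Set.range fun s : S => FreeGroup.of (Sum.inl s)) :
            Subgroup (FreeGroup (S ⊕ T))) : Set (FreeGroup (S ⊕ T))),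
          α.1 γ x ∈ U} := by
      ext α
      simp only [Set.mem_ofPred_eq, Set.mem_iInter]
      constructor
      · intro h U hU x
        obtain ⟨_, hyU, γ, hγ, rfl⟩ := (h x).inter_open_nonempty U
          (TopologicalSpace.isOpen_of_mem_countableBasis hU)
          (TopologicalSpace.nonempty_of_mem_countableBasis hU)
        exact ⟨γ, hγ, hyU⟩
      · intro h x
        rw [(TopologicalSpace.isBasis_countableBasis CantorSp).dense_iff]
        intro U hU _
        obtain ⟨γ, hγ, hyU⟩ := h U hU x
        exact ⟨_, hyU, γ, hγ, rfl⟩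
    rw [hset]
    refine IsGδ.biInter (TopologicalSpace.countable_countableBasis CantorSp) fun U hU => ?_
    refine (isOpen_forall_exists_mem (fun (α : {α : FreeGroup (S ⊕ T) → (CantorSp ≃ₜ CantorSp) //
      ∀ γ γ', α (γ * γ') = (α γ').trans (α γ)}) γ => α.1 γ) ?_ _
      (TopologicalSpace.isOpen_of_mem_countableBasis hU)).isGδ
    exact fun γ => (continuous_apply γ).comp continuous_subtype_val
  · intro α
    obtain ⟨e⟩ : Nonempty (S ≃ ℕ) := nonempty_equiv_of_countable
    -- Multiplication of homeomorphisms is composition, so `α` is a group homomorphism.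
    let αHom : FreeGroup (S ⊕ T) →* (CantorSp ≃ₜ CantorSp) := MonoidHom.mk' α.1 α.2
    refine mem_closure_of_tendsto (b := atTop)
      (f := fun N => ⟨modifiedAction e αHom N, map_mul (modifiedAction e αHom N)⟩) ?_
      (Eventually.of_forall fun N x => ?_)
    · rw [tendsto_subtype_rng, tendsto_pi_nhds]
      exact fun γ => tendsto_nhds_of_eventually_eq (eventually_modifiedAction_eq e αHom γ)
    · refine dense_of_flip_stable (x := x) ⟨1, one_mem _, ?_⟩ ?_
      · simp
      · rintro n _ ⟨γ, hγ, rfl⟩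
        -- The generator with index `N + n` flips the `n`-th coordinate.
        refine ⟨FreeGroup.of (Sum.inl (e.symm (N + n))) * γ,
          mul_mem (Subgroup.subset_closure ⟨_, rfl⟩) hγ, ?_⟩
        simp [modifiedAction]
end

section
/- Let X = {0,1}^ℕ be the Cantor space and let Γ be the free group on the disjoint union S ⊔ T of two disjoint countably infinite sets S and T. The set of free actions {α ∈ 𝒮 : for all γ ∈ Γ with γ ≠ 1 and all x ∈ X, α(γ)(x) ≠ x} is a dense G_δ subset of 𝒮 = Hom(Γ, Homeo(X)). -/
open Filter Topology Uniformity

/-! ### Residual finiteness of free groups -/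

/-- Free groups are residually finite. The finite set acted on consists of the elements of the
free group spelled by the suffixes of the reduced word of `γ`; on it, left multiplication by a
generator is a partial injection, which extends to a permutation. The resulting action takes `1`
to `γ`. -/
theorem exists_perm_ne_one {A : Type} (γ : FreeGroup A) (hγ : γ ≠ 1) :
    ∃ (V : Type) (_ : Finite V) (φ : FreeGroup A →* Equiv.Perm V), φ γ ≠ 1 := by
  classical
  let W : Finset (FreeGroup A) := (γ.toWord.tails.map FreeGroup.mk).toFinset
  have hW : ∀ L, L <:+ γ.toWord → FreeGroup.mk L ∈ W := fun L hL => by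
    simp only [W, List.mem_toFinset, List.mem_map, List.mem_tails]
    exact ⟨L, hL, rfl⟩
  have key : ∀ a : A, ∃ σ : Equiv.Perm W, ∀ x y : W,
      (FreeGroup.of a * x.1 = y.1 → σ x = y) := by
    intro a
    obtain ⟨σ, hσ⟩ := Equiv.Perm.exists_extending_pair
      (α := {x : W // FreeGroup.of a * x.1 ∈ W}) (fun x => x.1)
      (fun x => (⟨FreeGroup.of a * x.1.1, x.2⟩ : W)) Subtype.val_injective
      (fun x y h => by
        apply Subtype.ext; apply Subtype.ext
        simpa using h)
    refine ⟨σ, fun x y h => ?_⟩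
    rw [hσ ⟨x, h ▸ y.2⟩]
    exact Subtype.ext h
  choose σ hσ using key
  refine ⟨W, inferInstance, FreeGroup.lift σ, fun h => hγ ?_⟩
  have main : ∀ L (hL : L <:+ γ.toWord),
      FreeGroup.lift σ (FreeGroup.mk L) ⟨1, hW [] (List.nil_suffix)⟩ =
        ⟨FreeGroup.mk L, hW L hL⟩ := by
    intro L
    induction L with
    | nil => intro hL; rfl
    | cons p L ih =>
      intro hL
      have hL' : L <:+ γ.toWord := (List.suffix_cons p L).trans hL
      obtain ⟨a, b⟩ := p
      have hc : FreeGroup.mk ((a, b) :: L) = FreeGroup.mk [(a, b)] * FreeGroup.mk L := by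
        simp
      rw [show FreeGroup.lift σ (FreeGroup.mk ((a, b) :: L)) =
        FreeGroup.lift σ (FreeGroup.mk [(a, b)]) * FreeGroup.lift σ (FreeGroup.mk L) by
          rw [hc, map_mul], Equiv.Perm.mul_apply, ih hL']
      cases b
      · have : FreeGroup.mk [(a, false)] = (FreeGroup.of a)⁻¹ := rfl
        rw [this, map_inv, FreeGroup.lift_apply_of, Equiv.Perm.inv_eq_iff_eq, eq_comm]
        apply hσ
        simp only [hc, this, mul_inv_cancel_left]
      · rw [← FreeGroup.of, FreeGroup.lift_apply_of]
        apply hσ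
        simp only [hc]; rfl
  have h1 := congrArg Subtype.val (main γ.toWord List.suffix_rfl)
  simp only [FreeGroup.mk_toWord, h] at h1
  exact h1.symm

/-! ### Free actions on the Cantor space -/

/-- Prepending a bit to a sequence. -/
def consBit : Bool × CantorSp ≃ₜ CantorSp where
  toFun p k := Nat.casesOn k p.1 p.2
  invFun x := (x 0, fun k => x (k + 1))
  left_inv _ := rfl
  right_inv x := by ext k; cases k <;> rfl
  continuous_toFun := continuous_pi fun k => by cases k <;> simp <;> fun_prop
  continuous_invFun := by fun_prop

/-- Induction on `n`: `n + 2` copies of the Cantor space are `n + 1` copies and a further one,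
hence two copies, hence one. -/
theorem fin_prod_cantor (n : ℕ) : Nonempty (Fin (n + 1) × CantorSp ≃ₜ CantorSp) := by
  induction n with
  | zero => exact ⟨Homeomorph.uniqueProd (Fin 1) CantorSp⟩
  | succ n ih =>
    obtain ⟨e⟩ := ih
    have e₀ : Fin (n + 1 + 1) ≃ₜ Fin (n + 1) ⊕ Fin 1 := finSumFinEquiv.symm.toHomeomorphOfDiscrete
    have e₁ : Bool ≃ₜ Fin 1 ⊕ Fin 1 := (Fintype.equivOfCardEq (by simp)).toHomeomorphOfDiscrete
    have u : Fin 1 × CantorSp ≃ₜ CantorSp := Homeomorph.uniqueProd (Fin 1) CantorSp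
    exact ⟨(e₀.prodCongr (.refl _)).trans <| Homeomorph.sumProdDistrib.trans <|
      ((e.trans u.symm).sumCongr (.refl _)).trans <| Homeomorph.sumProdDistrib.symm.trans <|
      (e₁.symm.prodCongr (.refl _)).trans consBit⟩

theorem finite_prod_cantor (G : Type) [Finite G] [Nonempty G] [TopologicalSpace G]
    [DiscreteTopology G] : Nonempty (G × CantorSp ≃ₜ CantorSp) := by
  obtain ⟨n, ⟨e⟩⟩ := Finite.exists_equiv_fin G
  cases n with
  | zero => exact (e (Classical.arbitrary G)).elim0
  | succ n =>
    obtain ⟨f⟩ := fin_prod_cantor n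
    exact ⟨(e.toHomeomorphOfDiscrete.prodCongr (.refl _)).trans f⟩

/-- The action on `Y` obtained by transporting an action on `X` along a homeomorphism. -/
def conjHom {Γ X Y : Type} [Group Γ] [TopologicalSpace X] [TopologicalSpace Y] (e : X ≃ₜ Y)
    (ρ : Γ →* (X ≃ₜ X)) : Γ →* (Y ≃ₜ Y) where
  toFun γ := (e.symm.trans (ρ γ)).trans e
  map_one' := by ext; simp
  map_mul' γ γ' := by ext; simp

/-- A finite quotient `φ` with `φ γ ≠ 1` acts on itself by left translation, and there `γ` has no
fixed point; multiplying the finite quotient by the Cantor space gives a Cantor space. -/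
theorem exists_action_fixedPointFree {A : Type} (γ : FreeGroup A) (hγ : γ ≠ 1) :
    ∃ ρ : FreeGroup A →* (CantorSp ≃ₜ CantorSp), ∀ x, ρ γ x ≠ x := by
  obtain ⟨V, _, φ, hφ⟩ := exists_perm_ne_one γ hγ
  let _ : TopologicalSpace (Equiv.Perm V) := ⊥
  have _ : DiscreteTopology (Equiv.Perm V) := ⟨rfl⟩
  obtain ⟨e⟩ := finite_prod_cantor (Equiv.Perm V)
  let ρ : FreeGroup A →* (Equiv.Perm V × CantorSp ≃ₜ Equiv.Perm V × CantorSp) :=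
    { toFun := fun g => (Equiv.mulLeft (φ g)).toHomeomorphOfDiscrete.prodCongr (.refl _)
      map_one' := Homeomorph.ext fun p => Prod.ext
        (show φ 1 * p.1 = p.1 by rw [map_one, one_mul]) rfl
      map_mul' := fun g g' => Homeomorph.ext fun p => Prod.ext
        (show φ (g * g') * p.1 = φ g * (φ g' * p.1) by rw [map_mul, mul_assoc]) rfl }
  refine ⟨conjHom e ρ, fun x hx => hφ ?_⟩
  have h1 : ρ γ (e.symm x) = e.symm x := e.injective (by simpa [conjHom] using hx)
  have h2 : φ γ * (e.symm x).1 = (e.symm x).1 := congrArg Prod.fst h1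
  simpa using h2

/-- The product, over all `γ`, of actions in which `γ` has no fixed point is free, and a countable
product of Cantor spaces is a Cantor space. -/
theorem exists_free_action (A : Type) [Countable A] [Nonempty A] :
    ∃ ρ : FreeGroup A →* (CantorSp ≃ₜ CantorSp), ∀ γ, γ ≠ 1 → ∀ x, ρ γ x ≠ x := by
  classical
  have h : ∀ γ : FreeGroup A, ∃ ρ : FreeGroup A →* (CantorSp ≃ₜ CantorSp),
      γ ≠ 1 → ∀ x, ρ γ x ≠ x := fun γ => by
    by_cases hγ : γ = 1
    · exact ⟨1, fun h => (h hγ).elim⟩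
    · obtain ⟨ρ, hρ⟩ := exists_action_fixedPointFree γ hγ
      exact ⟨ρ, fun _ => hρ⟩
  choose ρ hρ using h
  obtain ⟨c⟩ : Nonempty (FreeGroup A × ℕ ≃ ℕ) := nonempty_equiv_of_countable
  let e : (FreeGroup A → CantorSp) ≃ₜ CantorSp :=
    { toFun := fun y k => y (c.symm k).1 (c.symm k).2
      invFun := fun x g k => x (c (g, k))
      left_inv := fun y => by simp
      right_inv := fun y => by simp
      continuous_toFun := by fun_prop
      continuous_invFun := by fun_prop }
  let R : FreeGroup A →* ((FreeGroup A → CantorSp) ≃ₜ (FreeGroup A → CantorSp)) :=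
    { toFun := fun g => Homeomorph.piCongrRight fun d => ρ d g
      map_one' := by ext y; simp [Homeomorph.piCongrRight]
      map_mul' := fun g g' => by ext y; simp [Homeomorph.piCongrRight] }
  refine ⟨conjHom e R, fun γ hγ x hx => hρ γ hγ (e.symm x γ) ?_⟩
  have h1 : R γ (e.symm x) = e.symm x := e.injective (by simpa [conjHom] using hx)
  exact congrFun h1 γ

/-! ### Approximation by free actions -/

/-- There are homeomorphisms from the square of the Cantor space to the Cantor space arbitrarily
close to the first projection. -/
theorem exists_interleave (n : ℕ) : ∃ h : CantorSp × CantorSp ≃ₜ CantorSp,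
    ∀ p, ∀ k < n, h p k = p.1 k := by
  -- The first `n` bits of the first sequence stay in place; afterwards the sequences alternate.
  let f : ℕ ⊕ ℕ → ℕ := Sum.elim (fun k => if k < n then k else n + 2 * (k - n))
    (fun k => n + 2 * k + 1)
  have hf : f.Bijective := by
    constructor
    · rintro (a | a) (b | b) hab <;> simp only [f, Sum.elim_inl, Sum.elim_inr] at hab <;>
        (try split_ifs at hab) <;>
        simp only [Sum.inl.injEq, Sum.inr.injEq, reduceCtorEq] <;> omega
    · intro k
      by_cases hk : k < n
      · exact ⟨.inl k, by simp [f, hk]⟩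
      · rcases Nat.even_or_odd' (k - n) with ⟨m, hm | hm⟩
        · exact ⟨.inl (n + m), by simp [f]; omega⟩
        · exact ⟨.inr m, by simp [f]; omega⟩
  let c := Equiv.ofBijective f hf
  refine ⟨Homeomorph.sumArrowHomeomorphProdArrow.symm.trans
    (Homeomorph.piCongrLeft (Y := fun _ => Bool) c), fun p k hk => ?_⟩
  have hc : c (.inl k) = k := by simp [c, f, hk]
  conv_lhs => rw [← hc]
  simp only [Homeomorph.trans_apply]
  exact (Equiv.piCongrLeft_apply_apply (fun _ => Bool) c _ _)

theorem tendstoUniformly_cantor_iff {F : ℕ → CantorSp → CantorSp} {f : CantorSp → CantorSp} :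
    TendstoUniformly F f atTop ↔ ∀ k, ∀ᶠ n in atTop, ∀ z, F n z k = f z k := by
  rw [tendstoUniformly_iff_tendsto, Pi.uniformity, tendsto_iInf]
  refine forall_congr' fun k => ?_
  rw [tendsto_comap_iff, DiscreteUniformity.eq_principal_setRelId]
  simp only [tendsto_principal, Function.comp_def, SetRel.mem_id]
  rw [← principal_univ, eventually_prod_principal_iff]
  simp [eq_comm]

/-- Conjugating `g × r` by homeomorphisms that converge to the first projection gives maps
converging uniformly to `g`. -/
theorem tendstoUniformly_conj (h : ℕ → (CantorSp × CantorSp ≃ₜ CantorSp))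
    (hh : ∀ n p, ∀ k < n, h n p k = p.1 k) (g : CantorSp → CantorSp) (hg : Continuous g)
    (r : CantorSp → CantorSp) :
    TendstoUniformly (fun n z => h n (g ((h n).symm z).1, r ((h n).symm z).2)) g atTop := by
  have h1 : TendstoUniformly (fun n z => ((h n).symm z).1) id atTop := by
    rw [tendstoUniformly_cantor_iff]
    intro k
    filter_upwards [eventually_gt_atTop k] with n hn z
    rw [← hh n _ k hn, Homeomorph.apply_symm_apply, id]
  have h2 := (CompactSpace.uniformContinuous_of_continuous hg).comp_tendstoUniformly h1
  rw [tendstoUniformly_cantor_iff] at h2 ⊢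
  intro k
  filter_upwards [eventually_gt_atTop k, h2 k] with n hn hk z
  rw [hh n _ k hn]
  exact hk z

theorem isOpen_fixedPointFree : IsOpen {φ : CantorSp ≃ₜ CantorSp | ∀ x, φ x ≠ x} := by
  have h0 : IsClosed {p : C(CantorSp, CantorSp) × CantorSp | p.1 p.2 = p.2} :=
    isClosed_eq (by fun_prop) (by fun_prop)
  have h1 := (isClosedMap_fst_of_compactSpace _ h0).isOpen_compl
  have h2 : Continuous fun φ : CantorSp ≃ₜ CantorSp => (φ : C(CantorSp, CantorSp)) :=
    continuous_fst.comp (continuous_induced_dom (f := fun φ : CantorSp ≃ₜ CantorSp =>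
      ((φ : C(CantorSp, CantorSp)), (φ.symm : C(CantorSp, CantorSp)))))
  convert h1.preimage h2 using 1
  ext φ
  simp

theorem tendsto_homeo {F : ℕ → (CantorSp ≃ₜ CantorSp)} {f : CantorSp ≃ₜ CantorSp}
    (h : TendstoUniformly (fun n z => F n z) f atTop)
    (h' : TendstoUniformly (fun n z => (F n).symm z) f.symm atTop) :
    Tendsto F atTop (𝓝 f) := by
  rw [nhds_induced, tendsto_comap_iff, nhds_prod_eq]
  exact (ContinuousMap.tendsto_iff_tendstoUniformly.2 h).prodMk
    (ContinuousMap.tendsto_iff_tendstoUniformly.2 h')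

/-- Let `Γ` be the free group on the disjoint union `S ⊔ T` of two disjoint
countably infinite sets.  The set of free actions in `𝒮 = Hom(Γ, Homeo(X))` (those `α`
with `α(γ)(x) ≠ x` for all `γ ≠ 1` and all `x`) is a dense `G_δ` subset of `𝒮`. -/
theorem free_actions_dense_Gdelta
    (S T : Type) [Countable S] [Infinite S] [Countable T] [Infinite T] :
    IsGδ {α : {α : FreeGroup (S ⊕ T) → (CantorSp ≃ₜ CantorSp) //
        ∀ γ γ', α (γ * γ') = (α γ').trans (α γ)} |
      ∀ γ : FreeGroup (S ⊕ T), γ ≠ 1 → ∀ x : CantorSp, (α.1 γ) x ≠ x} ∧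
    Dense {α : {α : FreeGroup (S ⊕ T) → (CantorSp ≃ₜ CantorSp) //
        ∀ γ γ', α (γ * γ') = (α γ').trans (α γ)} |
      ∀ γ : FreeGroup (S ⊕ T), γ ≠ 1 → ∀ x : CantorSp, (α.1 γ) x ≠ x} := by
  constructor
  · rw [Set.ofPred_forall]
    refine IsGδ.iInter fun γ => ?_
    rw [Set.ofPred_forall]
    refine IsGδ.iInter fun _ => IsOpen.isGδ ?_
    have hc : Continuous fun α : {α : FreeGroup (S ⊕ T) → (CantorSp ≃ₜ CantorSp) //
        ∀ γ γ', α (γ * γ') = (α γ').trans (α γ)} => α.1 γ :=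
      (continuous_apply γ).comp continuous_subtype_val
    exact isOpen_fixedPointFree.preimage hc
  · intro α
    obtain ⟨ρ, hρ⟩ := exists_free_action (S ⊕ T)
    choose h hh using exists_interleave
    -- The actions `α × ρ` are free because `ρ` is; `β n` transports them back to the Cantor space.
    let β : ℕ → {α : FreeGroup (S ⊕ T) → (CantorSp ≃ₜ CantorSp) //
        ∀ γ γ', α (γ * γ') = (α γ').trans (α γ)} := fun n =>
      ⟨fun γ => ((h n).symm.trans ((α.1 γ).prodCongr (ρ γ))).trans (h n), fun γ γ' => by
        ext x : 1
        simp only [Homeomorph.trans_apply, Homeomorph.symm_apply_apply, α.2 γ γ', map_mul]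
        rfl⟩
    refine mem_closure_of_tendsto (f := β) (b := atTop) ?_ (Eventually.of_forall fun n => ?_)
    · rw [tendsto_subtype_rng, tendsto_pi_nhds]
      intro γ
      exact tendsto_homeo
        (tendstoUniformly_conj h hh (α.1 γ) (α.1 γ).continuous (ρ γ))
        (tendstoUniformly_conj h hh (α.1 γ).symm (α.1 γ).symm.continuous (ρ γ).symm)
    · intro γ hγ x hx
      refine hρ γ hγ ((h n).symm x).2 ?_
      have h1 : (h n).symm ((β n).1 γ x) = (h n).symm x := by rw [hx]
      have h2 : (h n).symm ((β n).1 γ x) =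
          (α.1 γ ((h n).symm x).1, ρ γ ((h n).symm x).2) := (h n).symm_apply_apply _
      rw [h2] at h1
      exact congrArg Prod.snd h1
end

section
/- Let X = {0,1}^ℕ be the Cantor space and let Γ be the free group on the disjoint union S ⊔ T of two disjoint countably infinite sets S and T. The set of topologically amenable actions in 𝒮 = Hom(Γ, Homeo(X)) is a dense G_δ subset of 𝒮. -/
/-- An action `α` of a (countable discrete) group `Γ` by homeomorphisms on a compact
Hausdorff space `Y` is topologically amenable if for every finite `F ⊆ Γ` and `ε > 0`
there is a map `y ↦ m_y` from `Y` to the finitely supported probability densities on `Γ`,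
continuous for the `ℓ¹`-metric, such that `∑_h |m_y(g⁻¹h) − m_{α(g)(y)}(h)| < ε` for all
`g ∈ F`, `y ∈ Y`. -/
def TopologicallyAmenable {Γ Y : Type*} [Group Γ] [TopologicalSpace Y]
    (α : Γ → Y → Y) : Prop :=
  ∀ F : Finset Γ, ∀ ε : ℝ, 0 < ε →
    ∃ m : Y → Γ → ℝ,
      (∀ y γ, 0 ≤ m y γ ∧ m y γ ≤ 1) ∧
      (∀ y, (Function.support (m y)).Finite) ∧
      (∀ y, ∑' γ, m y γ = 1) ∧
      -- continuity of `y ↦ m_y` in the `ℓ¹`-metric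
      (∀ y : Y, ∀ δ : ℝ, 0 < δ → ∃ U : Set Y, IsOpen U ∧ y ∈ U ∧
        ∀ z ∈ U, (∑' γ, |m y γ - m z γ|) < δ) ∧
      (∀ g ∈ F, ∀ y : Y, (∑' h, |m y (g⁻¹ * h) - m (α g y) h|) < ε)

open Filter Topology

/-! ### The `ℓ¹`-distance and averages of point masses -/

/-- The `ℓ¹`-distance of two functions (junk unless `u - v` is summable; it is only applied to
finitely supported functions). -/
noncomputable def ellOneDist {G : Type*} (u v : G → ℝ) : ℝ := ∑' h, |u h - v h|

section EllOne
variable {G : Type*}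

lemma summable_ellOne {u v : G → ℝ} (hu : u.support.Finite) (hv : v.support.Finite) :
    Summable fun h => |u h - v h| := by
  apply summable_of_hasFiniteSupport
  refine (hu.union hv).subset fun h hh => ?_
  by_contra hc
  simp only [Set.mem_union, Function.mem_support, not_or, not_not] at hc
  simp [hc.1, hc.2] at hh

lemma ellOneDist_comm (u v : G → ℝ) : ellOneDist u v = ellOneDist v u := by
  simp only [ellOneDist, abs_sub_comm]

lemma ellOneDist_triangle {u v w : G → ℝ} (hu : u.support.Finite) (hv : v.support.Finite)
    (hw : w.support.Finite) : ellOneDist u w ≤ ellOneDist u v + ellOneDist v w := by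
  unfold ellOneDist
  rw [← (summable_ellOne hu hv).tsum_add (summable_ellOne hv hw)]
  exact (summable_ellOne hu hw).tsum_le_tsum (fun h => abs_sub_le _ _ _)
    ((summable_ellOne hu hv).add (summable_ellOne hv hw))

variable [Group G]

lemma ellOneDist_translate (g : G) (u v : G → ℝ) :
    ellOneDist (fun h => u (g * h)) (fun h => v (g * h)) = ellOneDist u v :=
  (Equiv.mulLeft g).tsum_eq fun h => |u h - v h|

lemma support_translate_finite (g : G) {u : G → ℝ} (hu : u.support.Finite) :
    (Function.support fun h => u (g * h)).Finite :=
  hu.preimage (mul_right_injective g).injOn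

end EllOne

open Classical in
/-- The average `N⁻¹ ∑_{j < N} δ_{u j}` of point masses along a sequence. -/
noncomputable def avgMass {G : Type*} (N : ℕ) (u : ℕ → G) (h : G) : ℝ :=
  (∑ j ∈ Finset.range N, if u j = h then (1 : ℝ) else 0) / N

section Avg
variable {G : Type*}

lemma avgMass_support (N : ℕ) (u : ℕ → G) : (avgMass N u).support.Finite := by
  classical
  refine ((Finset.range N).image u).finite_toSet.subset fun h hh => ?_
  by_contra hc
  apply hh
  have : ∀ j ∈ Finset.range N, (if u j = h then (1 : ℝ) else 0) = 0 := by
    intro j hj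
    rw [if_neg]
    rintro rfl
    exact hc (by simpa using ⟨j, by simpa using hj, rfl⟩)
  simp [avgMass, Finset.sum_eq_zero this]

lemma avgMass_congr {N : ℕ} {u v : ℕ → G} {h h' : G} (H : ∀ j < N, u j = h ↔ v j = h') :
    avgMass N u h = avgMass N v h' := by
  unfold avgMass
  congr 1
  refine Finset.sum_congr rfl fun j hj => ?_
  have H := H j (Finset.mem_range.mp hj)
  by_cases c : u j = h
  · rw [if_pos c, if_pos (H.mp c)]
  · rw [if_neg c, if_neg (mt H.mpr c)]

lemma avgMass_nonneg (N : ℕ) (u : ℕ → G) (h : G) : 0 ≤ avgMass N u h := by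
  unfold avgMass
  refine div_nonneg (Finset.sum_nonneg fun j _ => ?_) (Nat.cast_nonneg _)
  split_ifs <;> norm_num

lemma avgMass_le_one (N : ℕ) (u : ℕ → G) (h : G) : avgMass N u h ≤ 1 := by
  classical
  unfold avgMass
  refine div_le_one_of_le₀ ?_ (Nat.cast_nonneg _)
  calc _ ≤ ∑ j ∈ Finset.range N, (1 : ℝ) := Finset.sum_le_sum fun j _ => by
        split_ifs <;> norm_num
    _ = N := by simp

lemma tsum_indicator_point (x : G) [∀ h, Decidable (x = h)] :
    ∑' h, (if x = h then (1 : ℝ) else 0) = 1 := by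
  rw [tsum_eq_single x]
  · simp
  · intro b hb
    simp [hb.symm]

lemma summable_indicator_point (x : G) [∀ h, Decidable (x = h)] :
    Summable fun h => (if x = h then (1 : ℝ) else 0) := by
  apply summable_of_hasFiniteSupport
  refine (Set.finite_singleton x).subset fun h hh => ?_
  by_contra hc
  exact hh (if_neg fun e => hc e.symm)

lemma avgMass_tsum {N : ℕ} (hN : 0 < N) (u : ℕ → G) : ∑' h, avgMass N u h = 1 := by
  classical
  unfold avgMass
  rw [tsum_div_const, Summable.tsum_finsetSum fun j _ => summable_indicator_point _]
  have hN' : (N : ℝ) ≠ 0 := by positivity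
  simp [hN']

/-- Shifting the sequence by one step only changes the two boundary terms of the average. -/
lemma ellOneDist_avgMass_shift (N : ℕ) (u v : ℕ → G) (huv : ∀ j, u j = v (j + 1)) :
    ellOneDist (avgMass N u) (avgMass N v) ≤ 2 / N := by
  classical
  have key : ∀ h, |avgMass N u h - avgMass N v h| ≤
      ((if v N = h then (1 : ℝ) else 0) + (if v 0 = h then (1 : ℝ) else 0)) / N := by
    intro h
    have e : avgMass N u h - avgMass N v h =
        ((if v N = h then (1 : ℝ) else 0) - (if v 0 = h then (1 : ℝ) else 0)) / N := by
      unfold avgMass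
      simp only [huv]
      rw [← sub_div, ← Finset.sum_sub_distrib,
        Finset.sum_range_sub fun j => if v j = h then (1 : ℝ) else 0]
    rw [e, abs_div, Nat.abs_cast]
    gcongr
    refine (abs_sub _ _).trans (le_of_eq ?_)
    congr 1 <;> split_ifs <;> norm_num
  have hs : Summable fun h =>
      ((if v N = h then (1 : ℝ) else 0) + (if v 0 = h then (1 : ℝ) else 0)) / (N : ℝ) :=
    ((summable_indicator_point _).add (summable_indicator_point _)).div_const _
  refine ((summable_ellOne (avgMass_support N u) (avgMass_support N v)).tsum_le_tsum key hs).trans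
    (le_of_eq ?_)
  rw [tsum_div_const, (summable_indicator_point _).tsum_add (summable_indicator_point _),
    tsum_indicator_point, tsum_indicator_point]
  norm_num

end Avg

/-! ### Ping-pong actions are amenable -/

section PingPong
variable {ι Y : Type*} [TopologicalSpace Y]

/-- The element of the free group given by a single signed letter. -/
def letterElt (l : ι × Bool) : FreeGroup ι := FreeGroup.mk [l]

lemma letterElt_inv (l : ι × Bool) : (letterElt l)⁻¹ = letterElt (l.1, !l.2) := by
  simp [letterElt, FreeGroup.inv_mk, FreeGroup.invRev]

open Classical in
/-- The length-`n` prefix of the itinerary of `y` through the ping-pong sets `A l` with `l` a signed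
letter over `K`: if `y ∈ A l`, record `l` and continue from `l⁻¹ y`; stop outside all of these
sets. -/
noncomputable def itin (b : FreeGroup ι →* (Y ≃ₜ Y)) (A : ι × Bool → Set Y) (K : Finset ι) :
    ℕ → Y → FreeGroup ι
  | 0, _ => 1
  | n + 1, y =>
    if h : ∃ l : ι × Bool, l.1 ∈ K ∧ y ∈ A l then
      letterElt h.choose * itin b A K n (b (letterElt h.choose)⁻¹ y)
    else 1

variable {b : FreeGroup ι →* (Y ≃ₜ Y)} {A : ι × Bool → Set Y} {K : Finset ι}

lemma itin_succ_of_mem (hd : ∀ l l' y, y ∈ A l → y ∈ A l' → l = l') (n : ℕ) {y : Y}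
    {l : ι × Bool} (hl : l.1 ∈ K) (hy : y ∈ A l) :
    itin b A K (n + 1) y = letterElt l * itin b A K n (b (letterElt l)⁻¹ y) := by
  have h : ∃ l : ι × Bool, l.1 ∈ K ∧ y ∈ A l := ⟨l, hl, hy⟩
  have e : h.choose = l := hd _ _ _ h.choose_spec.2 hy
  rw [itin, dif_pos h, e]

lemma itin_locallyConstant (hc : ∀ l, IsClopen (A l))
    (hd : ∀ l l' y, y ∈ A l → y ∈ A l' → l = l') (n : ℕ) :
    ∀ y, ∀ᶠ z in 𝓝 y, itin b A K n z = itin b A K n y := by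
  induction n with
  | zero => intro y; exact Eventually.of_forall fun _ => rfl
  | succ n ih =>
    intro y
    by_cases h : ∃ l : ι × Bool, l.1 ∈ K ∧ y ∈ A l
    · obtain ⟨l, hl, hy⟩ := h
      have h1 : ∀ᶠ z in 𝓝 y, z ∈ A l := (hc l).isOpen.mem_nhds hy
      have h2 := (b (letterElt l)⁻¹).continuous.continuousAt.eventually
        (ih (b (letterElt l)⁻¹ y))
      filter_upwards [h1, h2] with z hz1 hz2
      rw [itin_succ_of_mem hd n hl hz1, itin_succ_of_mem hd n hl hy, hz2]
    · have h1 : ∀ᶠ z in 𝓝 y, ∀ l ∈ K ×ˢ (Finset.univ : Finset Bool), z ∉ A l := by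
        rw [Finset.eventually_all]
        intro l hl
        refine (hc l).isClosed.isOpen_compl.mem_nhds fun hy => h ⟨l, ?_, hy⟩
        simpa using hl
      filter_upwards [h1] with z hz
      have hz' : ¬ ∃ l : ι × Bool, l.1 ∈ K ∧ z ∈ A l := by
        rintro ⟨l, hl, hzl⟩
        exact hz l (by simpa using hl) hzl
      rw [itin, dif_neg hz', itin, dif_neg h]

lemma avgMass_translate {G : Type*} [Group G] (N : ℕ) (u : ℕ → G) (g : G) :
    (fun h => avgMass N u (g⁻¹ * h)) = avgMass N fun j => g * u j := by
  funext h
  exact avgMass_congr fun j _ => eq_inv_mul_iff_mul_eq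

/-- For a single letter `g`, the itinerary of `g y` is the one of `y` with `g` prepended, or with
`g⁻¹` removed from the front; so the averages over prefixes move by at most `2 / N`. -/
lemma itin_letter (hd : ∀ l l' y, y ∈ A l → y ∈ A l' → l = l')
    (hp : ∀ (l : ι × Bool) (y : Y), y ∉ A (l.1, !l.2) → b (letterElt l) y ∈ A l)
    {l : ι × Bool} (hl : l.1 ∈ K) (N : ℕ) (y : Y) :
    ellOneDist (fun h => avgMass N (fun j => itin b A K j y) ((letterElt l)⁻¹ * h))
      (avgMass N fun j => itin b A K j (b (letterElt l) y)) ≤ 2 / N := by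
  rw [avgMass_translate]
  by_cases hy : y ∈ A (l.1, !l.2)
  · rw [ellOneDist_comm]
    refine ellOneDist_avgMass_shift N _ _ fun j => ?_
    rw [itin_succ_of_mem (l := (l.1, !l.2)) hd j hl hy, ← letterElt_inv, inv_inv,
      mul_inv_cancel_left]
  · refine ellOneDist_avgMass_shift N _ _ fun j => ?_
    rw [itin_succ_of_mem hd j hl (hp l y hy), ← Homeomorph.mul_apply, ← map_mul]
    simp

lemma itin_word (hd : ∀ l l' y, y ∈ A l → y ∈ A l' → l = l')
    (hp : ∀ (l : ι × Bool) (y : Y), y ∉ A (l.1, !l.2) → b (letterElt l) y ∈ A l)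
    (N : ℕ) (L : List (ι × Bool)) (hL : ∀ l ∈ L, l.1 ∈ K) (y : Y) :
    ellOneDist (fun h => avgMass N (fun j => itin b A K j y) ((FreeGroup.mk L)⁻¹ * h))
      (avgMass N fun j => itin b A K j (b (FreeGroup.mk L) y)) ≤ 2 * L.length / N := by
  induction L with
  | nil =>
    have h1 : FreeGroup.mk ([] : List (ι × Bool)) = 1 := rfl
    simp [h1, ellOneDist]
  | cons l L ih =>
    have ih := ih fun l' hl' => hL l' (List.mem_cons_of_mem _ hl')
    have hmk : FreeGroup.mk (l :: L) = letterElt l * FreeGroup.mk L := by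
      simp [letterElt]
    have h2 := itin_letter hd hp (hL l List.mem_cons_self) N (b (FreeGroup.mk L) y)
    rw [← ellOneDist_translate (letterElt l)⁻¹] at ih
    have h3 := ellOneDist_triangle
      (u := fun h => avgMass N (fun j => itin b A K j y)
        ((FreeGroup.mk L)⁻¹ * ((letterElt l)⁻¹ * h)))
      (support_translate_finite (letterElt l)⁻¹
        (support_translate_finite (FreeGroup.mk L)⁻¹ (avgMass_support N _)))
      (support_translate_finite (letterElt l)⁻¹
        (avgMass_support N fun j => itin b A K j (b (FreeGroup.mk L) y)))
      (avgMass_support N fun j => itin b A K j (b (letterElt l) (b (FreeGroup.mk L) y)))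
    rw [hmk, map_mul, mul_inv_rev]
    simp only [mul_assoc, Homeomorph.mul_apply]
    refine (h3.trans (add_le_add ih h2)).trans (le_of_eq ?_)
    push_cast [List.length_cons]
    ring

/-- An action of a free group admitting pairwise disjoint clopen ping-pong sets, one for each
signed letter, is topologically amenable. Only finitely many letters occur in a given finite
`F`, and restricting itineraries to these keeps the prefixes locally constant even when the rank is
infinite. -/
theorem pingPong_amenable (hc : ∀ l, IsClopen (A l))
    (hd : ∀ l l' y, y ∈ A l → y ∈ A l' → l = l')
    (hp : ∀ (l : ι × Bool) (y : Y), y ∉ A (l.1, !l.2) → b (letterElt l) y ∈ A l) :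
    TopologicallyAmenable fun γ (y : Y) => b γ y := by
  classical
  intro F ε hε
  let K : Finset ι := F.biUnion fun g => (g.toWord.map Prod.fst).toFinset
  let M : ℕ := F.sup fun g => g.toWord.length
  obtain ⟨N, hN⟩ := exists_nat_gt (2 * M / ε)
  have hN0 : (0 : ℝ) < N := lt_of_le_of_lt (by positivity) hN
  have hN1 : 0 < N := by exact_mod_cast hN0
  refine ⟨fun y => avgMass N fun j => itin b A K j y,
    fun y γ => ⟨avgMass_nonneg _ _ _, avgMass_le_one _ _ _⟩, fun y => avgMass_support _ _,
    fun y => avgMass_tsum hN1 _, ?_, ?_⟩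
  · intro y δ hδ
    have h : ∀ᶠ z in 𝓝 y, ∀ j ∈ Finset.range N, itin b A K j z = itin b A K j y := by
      rw [Finset.eventually_all]
      exact fun j _ => itin_locallyConstant hc hd j y
    obtain ⟨U, hU, hUo, hyU⟩ := eventually_nhds_iff.mp h
    refine ⟨U, hUo, hyU, fun z hz => ?_⟩
    have e : (avgMass N fun j => itin b A K j z) = avgMass N fun j => itin b A K j y := by
      funext γ
      exact avgMass_congr fun j hj => by rw [hU z hz j (Finset.mem_range.mpr hj)]
    simpa [e] using hδ
  · intro g hg y
    have hL : ∀ l ∈ g.toWord, l.1 ∈ K := by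
      intro l hl
      refine Finset.mem_biUnion.mpr ⟨g, hg, ?_⟩
      simp only [List.mem_toFinset, List.mem_map]
      exact ⟨l, hl, rfl⟩
    have h := itin_word hd hp N g.toWord hL y
    rw [FreeGroup.mk_toWord] at h
    refine lt_of_le_of_lt h ?_
    have hlen : (g.toWord.length : ℝ) ≤ M := by
      exact_mod_cast Finset.le_sup (f := fun g : FreeGroup ι => g.toWord.length) hg
    rw [div_lt_iff₀ hε] at hN
    rw [div_lt_iff₀ hN0]
    nlinarith

end PingPong

/-! ### A ping-pong action on the Cantor space -/

/-- The sequences whose first `1` is at position `n`. -/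
def cyl (n : ℕ) : Set CantorSp := {x | (∀ i < n, x i = false) ∧ x n = true}

/-- `0ⁿ 1 z`. -/
def consCyl (n : ℕ) (z : CantorSp) : CantorSp :=
  fun k => if k < n then false else if k = n then true else z (k - (n + 1))

/-- The inverse of `consCyl n` on `cyl n`. -/
def dropCyl (n : ℕ) (x : CantorSp) : CantorSp := fun k => x (k + (n + 1))

/-- Homeomorphism of the Cantor space onto the complement of `cyl n`: insert a `0` at position `n`
in those sequences that start with `0ⁿ`. -/
def insZero (n : ℕ) (z : CantorSp) : CantorSp :=
  fun k => if k < n ∨ ∃ m < n, z m = true then z k else if k = n then false else z (k - 1)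

/-- The inverse of `insZero n` on the complement of `cyl n`. -/
def delZero (n : ℕ) (x : CantorSp) : CantorSp :=
  fun k => if k < n ∨ ∃ m < n, x m = true then x k else x (k + 1)

lemma cyl_disjoint {p q : ℕ} {x : CantorSp} (hp : x ∈ cyl p) (hq : x ∈ cyl q) : p = q := by
  rcases lt_trichotomy p q with h | h | h
  · have := hq.1 p h; simp [hp.2] at this
  · exact h
  · have := hp.1 q h; simp [hq.2] at this

lemma isClopen_coord (n : ℕ) (c : Bool) : IsClopen {x : CantorSp | x n = c} :=
  (isClopen_discrete {c}).preimage (continuous_apply n)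

lemma isClopen_exists_true (n : ℕ) : IsClopen {x : CantorSp | ∃ m < n, x m = true} := by
  have e : {x : CantorSp | ∃ m < n, x m = true} =
      ⋃ m ∈ Finset.range n, {x : CantorSp | x m = true} := by
    ext x; simp
  rw [e]
  exact isClopen_biUnion_finset fun m _ => isClopen_coord m true

lemma isClopen_cyl (n : ℕ) : IsClopen (cyl n) := by
  have e : cyl n = {x : CantorSp | ∃ m < n, x m = true}ᶜ ∩ {x | x n = true} := by
    ext x; simp [cyl]
  rw [e]
  exact (isClopen_exists_true n).compl.inter (isClopen_coord n true)

lemma continuous_ite_clopen {X Z : Type*} [TopologicalSpace X] [TopologicalSpace Z] {p : X → Prop}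
    [∀ x, Decidable (p x)] (hp : IsClopen {x | p x}) {f g : X → Z} (hf : Continuous f)
    (hg : Continuous g) : Continuous fun x => if p x then f x else g x :=
  Continuous.if (by rw [hp.frontier_eq]; simp) hf hg

lemma isClopen_or_exists_true (k n : ℕ) :
    IsClopen {x : CantorSp | k < n ∨ ∃ m < n, x m = true} := by
  by_cases h : k < n
  · simp only [h, true_or, Set.ofPred_true]; exact isClopen_univ
  · simp only [h, false_or]; exact isClopen_exists_true n

lemma continuous_insZero (n : ℕ) : Continuous (insZero n) := by
  refine continuous_pi fun k => continuous_ite_clopen (isClopen_or_exists_true k n)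
    (continuous_apply k) ?_
  split_ifs
  · exact continuous_const
  · exact continuous_apply _

lemma continuous_delZero (n : ℕ) : Continuous (delZero n) :=
  continuous_pi fun k => continuous_ite_clopen (isClopen_or_exists_true k n)
    (continuous_apply k) (continuous_apply _)

lemma continuous_consCyl (n : ℕ) : Continuous (consCyl n) := by
  refine continuous_pi fun k => ?_
  unfold consCyl
  split_ifs
  · exact continuous_const
  · exact continuous_const
  · exact continuous_apply _

lemma continuous_dropCyl (n : ℕ) : Continuous (dropCyl n) :=
  continuous_pi fun _ => continuous_apply _

lemma consCyl_mem (n : ℕ) (z : CantorSp) : consCyl n z ∈ cyl n :=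
  ⟨fun i hi => by simp [consCyl, hi], by simp [consCyl]⟩

lemma dropCyl_consCyl (n : ℕ) (z : CantorSp) : dropCyl n (consCyl n z) = z := by
  funext k
  have h1 : ¬ k + (n + 1) < n := by omega
  have h2 : ¬ k + (n + 1) = n := by omega
  simp [dropCyl, consCyl, h1, h2]

lemma consCyl_dropCyl {n : ℕ} {x : CantorSp} (hx : x ∈ cyl n) : consCyl n (dropCyl n x) = x := by
  funext k
  unfold consCyl dropCyl
  split_ifs with h1 h2
  · exact (hx.1 k h1).symm
  · rw [h2, hx.2]
  · congr 1; omega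

lemma exists_insZero (n : ℕ) (z : CantorSp) :
    (∃ m < n, insZero n z m = true) ↔ ∃ m < n, z m = true := by
  refine exists_congr fun m => and_congr_right fun hm => ?_
  simp [insZero, hm]

lemma exists_delZero (n : ℕ) (z : CantorSp) :
    (∃ m < n, delZero n z m = true) ↔ ∃ m < n, z m = true := by
  refine exists_congr fun m => and_congr_right fun hm => ?_
  simp [delZero, hm]

lemma insZero_notMem (n : ℕ) (z : CantorSp) : insZero n z ∉ cyl n := by
  rintro ⟨h1, h2⟩
  by_cases h : ∃ m < n, z m = true
  · obtain ⟨m, hm, hz⟩ := (exists_insZero n z).mpr h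
    simp [h1 m hm] at hz
  · simp only [insZero, h, lt_irrefl, or_self, if_false, if_true] at h2
    exact Bool.false_ne_true h2

lemma delZero_insZero (n : ℕ) (z : CantorSp) : delZero n (insZero n z) = z := by
  funext k
  have hiff := or_congr_right (a := k < n) (exists_insZero n z)
  rw [delZero]
  by_cases h : k < n ∨ ∃ m < n, z m = true
  · rw [if_pos (hiff.mpr h), insZero, if_pos h]
  · have h' : ¬ (k + 1 < n ∨ ∃ m < n, z m = true) := by
      rintro (h' | h')
      · exact h (Or.inl (by omega))
      · exact h (Or.inr h')
    have h2 : ¬ k + 1 = n := fun e => h (Or.inl (by omega))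
    rw [if_neg (mt hiff.mp h), insZero, if_neg h', if_neg h2]
    rfl

lemma insZero_delZero {n : ℕ} {x : CantorSp} (hx : x ∉ cyl n) : insZero n (delZero n x) = x := by
  funext k
  have hiff := or_congr_right (a := k < n) (exists_delZero n x)
  rw [insZero]
  by_cases h : k < n ∨ ∃ m < n, x m = true
  · rw [if_pos (hiff.mpr h), delZero, if_pos h]
  · rw [if_neg (mt hiff.mp h)]
    push Not at h
    split_ifs with h2
    · by_contra hk
      refine hx ⟨fun i hi => by simpa using h.2 i hi, ?_⟩
      rw [← h2]
      cases hxk : x k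
      · exact absurd hxk.symm hk
      · rfl
    · have h' : ¬ (k - 1 < n ∨ ∃ m < n, x m = true) := by
        rintro (h' | ⟨m, hm, hxm⟩)
        · omega
        · exact h.2 m hm hxm
      rw [delZero, if_neg h']
      congr 1; omega

open Classical in
/-- The map sending the complement of `cyl q` onto `cyl p` and `cyl q` onto the complement of
`cyl p`. -/
noncomputable def pingMap (p q : ℕ) (x : CantorSp) : CantorSp :=
  if x ∈ cyl q then insZero p (dropCyl q x) else consCyl p (delZero q x)

lemma pingMap_pingMap (p q : ℕ) (x : CantorSp) : pingMap p q (pingMap q p x) = x := by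
  by_cases h : x ∈ cyl p
  · have e : pingMap q p x = insZero q (dropCyl p x) := if_pos h
    rw [e, pingMap, if_neg (insZero_notMem _ _), delZero_insZero, consCyl_dropCyl h]
  · have e : pingMap q p x = consCyl q (delZero p x) := if_neg h
    rw [e, pingMap, if_pos (consCyl_mem _ _), dropCyl_consCyl, insZero_delZero h]

lemma continuous_pingMap (p q : ℕ) : Continuous (pingMap p q) := by
  classical
  exact continuous_ite_clopen (p := (· ∈ cyl q)) (isClopen_cyl q)
    ((continuous_insZero p).comp (continuous_dropCyl q))
    ((continuous_consCyl p).comp (continuous_delZero q))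

/-- `pingMap p q` as a homeomorphism, with inverse `pingMap q p`. -/
noncomputable def pingHomeo (p q : ℕ) : CantorSp ≃ₜ CantorSp where
  toFun := pingMap p q
  invFun := pingMap q p
  left_inv := pingMap_pingMap q p
  right_inv := pingMap_pingMap p q
  continuous_toFun := continuous_pingMap p q
  continuous_invFun := continuous_pingMap q p

lemma pingHomeo_mem {p q : ℕ} {x : CantorSp} (hx : x ∉ cyl q) : pingHomeo p q x ∈ cyl p := by
  change pingMap p q x ∈ cyl p
  rw [pingMap, if_neg hx]
  exact consCyl_mem _ _

theorem exists_amenable_action (ι : Type*) [Countable ι] :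
    ∃ b : FreeGroup ι →* (CantorSp ≃ₜ CantorSp),
      TopologicallyAmenable fun γ (x : CantorSp) => b γ x := by
  obtain ⟨f, hf⟩ := Countable.exists_injective_nat (ι × Bool)
  refine ⟨FreeGroup.lift fun i => pingHomeo (f (i, true)) (f (i, false)),
    pingPong_amenable (A := fun l => cyl (f l)) (fun l => isClopen_cyl _)
      (fun l l' y h h' => hf (cyl_disjoint h h')) ?_⟩
  rintro ⟨i, c⟩ y hy
  cases c
  · have e : FreeGroup.lift (fun i => pingHomeo (f (i, true)) (f (i, false)))
        (letterElt (i, false)) = pingHomeo (f (i, false)) (f (i, true)) := by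
      simp only [letterElt, FreeGroup.lift_mk]
      simp
      rfl
    rw [e]
    exact pingHomeo_mem hy
  · have e : FreeGroup.lift (fun i => pingHomeo (f (i, true)) (f (i, false)))
        (letterElt (i, true)) = pingHomeo (f (i, true)) (f (i, false)) := by
      simp [letterElt, FreeGroup.lift_mk]
    rw [e]
    exact pingHomeo_mem hy

/-! ### Density -/

/-- Amenability pulls back along continuous equivariant maps. -/
lemma TopologicallyAmenable.pullback {G Y Z : Type*} [Group G] [TopologicalSpace Y]
    [TopologicalSpace Z] {α : G → Y → Y} {β : G → Z → Z} (hβ : TopologicallyAmenable β)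
    (π : Y → Z) (hπ : Continuous π) (he : ∀ g y, π (α g y) = β g (π y)) :
    TopologicallyAmenable α := by
  intro F ε hε
  obtain ⟨m, h1, h2, h3, h4, h5⟩ := hβ F ε hε
  refine ⟨fun y => m (π y), fun y => h1 _, fun y => h2 _, fun y => h3 _, fun y δ hδ => ?_,
    fun g hg y => ?_⟩
  · obtain ⟨U, hU, hyU, hm⟩ := h4 (π y) δ hδ
    exact ⟨π ⁻¹' U, hU.preimage hπ, hyU, fun z hz => hm _ hz⟩
  · simpa only [he] using h5 g hg (π y)

/-- Interleaving of two index sets that keeps the first `k` indices of the first one in place. -/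
def mixIdx (k : ℕ) : ℕ ⊕ ℕ ≃ ℕ where
  toFun := Sum.elim (fun j => if j < k then j else k + 2 * (j - k)) (fun j => k + 2 * j + 1)
  invFun i := if i < k then Sum.inl i else
    if (i - k) % 2 = 0 then Sum.inl (k + (i - k) / 2) else Sum.inr ((i - k) / 2)
  left_inv := by
    rintro (j | j)
    · by_cases h : j < k
      · simp [h]
      · have h1 : ¬ k + 2 * (j - k) < k := by omega
        have h2 : (k + 2 * (j - k) - k) % 2 = 0 := by omega
        simp only [Sum.elim_inl, if_neg h, if_neg h1, if_pos h2]
        congr 1; omega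
    · have h1 : ¬ k + 2 * j + 1 < k := by omega
      have h2 : ¬ (k + 2 * j + 1 - k) % 2 = 0 := by omega
      change (if k + 2 * j + 1 < k then Sum.inl (k + 2 * j + 1) else
        if (k + 2 * j + 1 - k) % 2 = 0 then Sum.inl (k + (k + 2 * j + 1 - k) / 2) else
          Sum.inr ((k + 2 * j + 1 - k) / 2)) = Sum.inr j
      rw [if_neg h1, if_neg h2]
      congr 1; omega
  right_inv := by
    intro i
    dsimp only
    split_ifs with h1 h2
    · simp [h1]
    · have h3 : ¬ k + (i - k) / 2 < k := by omega
      simp only [Sum.elim_inl, if_neg h3]; omega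
    · simp only [Sum.elim_inr]; omega

/-- A homeomorphism from the square of the Cantor space to the Cantor space which keeps the first
`k` coordinates of the first component. -/
def mixHomeo (k : ℕ) : CantorSp × CantorSp ≃ₜ CantorSp where
  toFun p i := Sum.elim p.1 p.2 ((mixIdx k).symm i)
  invFun x := (fun j => x (mixIdx k (Sum.inl j)), fun j => x (mixIdx k (Sum.inr j)))
  left_inv := by rintro ⟨u, v⟩; simp
  right_inv := by
    intro x
    funext i
    dsimp only
    obtain ⟨s, rfl⟩ := (mixIdx k).surjective i
    rw [Equiv.symm_apply_apply]
    rcases s with j | j <;> rfl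
  continuous_toFun := by
    refine continuous_pi fun i => ?_
    rcases (mixIdx k).symm i with j | j
    · exact (continuous_apply j).comp continuous_fst
    · exact (continuous_apply j).comp continuous_snd
  continuous_invFun := by
    refine Continuous.prodMk ?_ ?_ <;> exact continuous_pi fun j => continuous_apply _

lemma mixHomeo_apply {k j : ℕ} (hj : j < k) (p : CantorSp × CantorSp) :
    mixHomeo k p j = p.1 j := by
  change Sum.elim p.1 p.2 (if j < k then Sum.inl j else _) = _
  rw [if_pos hj]; rfl

lemma mixHomeo_symm_apply {k j : ℕ} (hj : j < k) (x : CantorSp) :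
    ((mixHomeo k).symm x).1 j = x j := by
  change x (if j < k then j else _) = _
  rw [if_pos hj]

/-- Two sequences of maps agreeing on more and more coordinates have the same uniform limits. -/
lemma tendsto_of_agree {F G : ℕ → C(CantorSp, CantorSp)} {f : C(CantorSp, CantorSp)}
    (hG : Tendsto G atTop (𝓝 f)) (h : ∀ k x, ∀ j < k, F k x j = G k x j) :
    Tendsto F atTop (𝓝 f) := by
  rw [ContinuousMap.tendsto_iff_tendstoUniformly, tendstoUniformly_iff_tendsto, Pi.uniformity,
    tendsto_iInf] at hG ⊢
  intro j
  have hj := hG j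
  rw [tendsto_comap_iff] at hj ⊢
  refine hj.congr' ?_
  have h1 : ∀ᶠ k in (atTop : Filter ℕ), ∀ x, F k x j = G k x j := by
    filter_upwards [eventually_gt_atTop j] with k hk x using h k x j hk
  have h2 : ∀ᶠ q : ℕ × CantorSp in atTop ×ˢ (⊤ : Filter CantorSp), F q.1 q.2 j = G q.1 q.2 j := by
    filter_upwards [h1.prod_inl (⊤ : Filter CantorSp)] with q hq using hq q.2
  filter_upwards [h2] with q hq
  simp [hq]

/-- The conjugate by `mixHomeo k` of the diagonal homeomorphism `φ × ψ`. -/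
def mixConj (k : ℕ) (φ ψ : CantorSp ≃ₜ CantorSp) : CantorSp ≃ₜ CantorSp :=
  (mixHomeo k).symm.trans ((φ.prodCongr ψ).trans (mixHomeo k))

lemma mixConj_apply (k : ℕ) (φ ψ : CantorSp ≃ₜ CantorSp) (x : CantorSp) :
    mixConj k φ ψ x = mixHomeo k (φ ((mixHomeo k).symm x).1, ψ ((mixHomeo k).symm x).2) := rfl

lemma tendsto_mixConj_map (φ ψ : CantorSp ≃ₜ CantorSp) :
    Tendsto (fun k => (mixConj k φ ψ : C(CantorSp, CantorSp))) atTop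
      (𝓝 (φ : C(CantorSp, CantorSp))) := by
  -- the first component of `(mixHomeo k).symm` tends to the identity
  let P : ℕ → C(CantorSp, CantorSp) := fun k =>
    ⟨fun x => ((mixHomeo k).symm x).1, continuous_fst.comp (mixHomeo k).symm.continuous⟩
  have hP : Tendsto P atTop (𝓝 (ContinuousMap.id CantorSp)) :=
    tendsto_of_agree (G := fun _ => ContinuousMap.id CantorSp) tendsto_const_nhds
      fun k x j hj => mixHomeo_symm_apply hj x
  have hG : Tendsto (fun k => (φ : C(CantorSp, CantorSp)).comp (P k)) atTop
      (𝓝 (φ : C(CantorSp, CantorSp))) := by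
    have := ((ContinuousMap.continuous_postcomp (φ : C(CantorSp, CantorSp))).tendsto _).comp hP
    simpa [Function.comp_def] using this
  exact tendsto_of_agree hG fun k x j hj => mixHomeo_apply hj _

lemma tendsto_mixConj (φ ψ : CantorSp ≃ₜ CantorSp) :
    Tendsto (fun k => mixConj k φ ψ) atTop (𝓝 φ) := by
  rw [nhds_induced, tendsto_comap_iff]
  exact (tendsto_mixConj_map φ ψ).prodMk_nhds (tendsto_mixConj_map φ.symm ψ.symm)

/-! ### The `G_δ` property -/

/-- For a family `m` of densities continuous in `ℓ¹`, almost equivariance of `m` along a group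
element `g` is an open condition on the homeomorphism through which `g` acts. -/
lemma isOpen_almostEquivariant {G : Type*} [Group G] (m : CantorSp → G → ℝ)
    (hs : ∀ y, (m y).support.Finite)
    (hc : ∀ y, ∀ δ : ℝ, 0 < δ → ∃ U : Set CantorSp, IsOpen U ∧ y ∈ U ∧
      ∀ z ∈ U, (∑' γ, |m y γ - m z γ|) < δ) (g : G) (ε : ℝ) :
    IsOpen {φ : CantorSp ≃ₜ CantorSp | ∀ y, (∑' h, |m y (g⁻¹ * h) - m (φ y) h|) < ε} := by
  let W : Set (CantorSp × CantorSp) :=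
    {p | ellOneDist (fun h => m p.1 (g⁻¹ * h)) (m p.2) < ε}
  have hW : IsOpen W := by
    rw [isOpen_iff_mem_nhds]
    rintro ⟨y, z⟩ hyz
    have hyz : ellOneDist (fun h => m y (g⁻¹ * h)) (m z) < ε := hyz
    obtain ⟨U, hU, hyU, hmU⟩ := hc y _ (half_pos (sub_pos.mpr hyz))
    obtain ⟨V, hV, hzV, hmV⟩ := hc z _ (half_pos (sub_pos.mpr hyz))
    refine mem_of_superset ((hU.prod hV).mem_nhds ⟨hyU, hzV⟩) ?_
    rintro ⟨y', z'⟩ ⟨hy', hz'⟩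
    have a1 : ellOneDist (fun h => m y' (g⁻¹ * h)) (fun h => m y (g⁻¹ * h)) <
        (ε - ellOneDist (fun h => m y (g⁻¹ * h)) (m z)) / 2 := by
      rw [ellOneDist_translate g⁻¹ (m y') (m y), ellOneDist_comm]
      exact hmU y' hy'
    have a2 : ellOneDist (m z) (m z') < (ε - ellOneDist (fun h => m y (g⁻¹ * h)) (m z)) / 2 :=
      hmV z' hz'
    have t1 := ellOneDist_triangle (support_translate_finite g⁻¹ (hs y'))
      (support_translate_finite g⁻¹ (hs y)) (hs z')
    have t2 := ellOneDist_triangle (support_translate_finite g⁻¹ (hs y)) (hs z) (hs z')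
    change ellOneDist (fun h => m y' (g⁻¹ * h)) (m z') < ε
    linarith
  -- The condition says that the graph map `y ↦ (y, φ y)` sends the compact space into `W`.
  have hcont : Continuous fun φ : CantorSp ≃ₜ CantorSp =>
      (ContinuousMap.id CantorSp).prodMk (φ : C(CantorSp, CantorSp)) := by
    have h1 : Continuous fun φ : CantorSp ≃ₜ CantorSp => (φ : C(CantorSp, CantorSp)) :=
      continuous_fst.comp (continuous_induced_dom (f := fun φ : CantorSp ≃ₜ CantorSp =>
        ((φ : C(CantorSp, CantorSp)), (φ.symm : C(CantorSp, CantorSp)))))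
    have h2 : Continuous fun f : C(CantorSp, CantorSp) =>
        (ContinuousMap.id CantorSp).prodMk f :=
      ContinuousMap.continuous_of_continuous_uncurry _
        (continuous_snd.prodMk continuous_eval)
    exact h2.comp h1
  have hopen := (ContinuousMap.isOpen_setOfPred_mapsTo (isCompact_univ (X := CantorSp)) hW).preimage
    hcont
  convert hopen using 1
  ext φ
  simp [Set.MapsTo, W, ellOneDist]

/-- Let `Γ` be the free group on the disjoint union `S ⊔ T` of two disjoint
countably infinite sets.  The set of topologically amenable actions in
`𝒮 = Hom(Γ, Homeo(X))` is a dense `G_δ` subset of `𝒮`. -/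
theorem amenable_actions_dense_Gdelta
    (S T : Type) [Countable S] [Infinite S] [Countable T] [Infinite T] :
    IsGδ {α : {α : FreeGroup (S ⊕ T) → (CantorSp ≃ₜ CantorSp) //
        ∀ γ γ', α (γ * γ') = (α γ').trans (α γ)} |
      TopologicallyAmenable fun γ (x : CantorSp) => (α.1 γ) x} ∧
    Dense {α : {α : FreeGroup (S ⊕ T) → (CantorSp ≃ₜ CantorSp) //
        ∀ γ γ', α (γ * γ') = (α γ').trans (α γ)} |
      TopologicallyAmenable fun γ (x : CantorSp) => (α.1 γ) x} := by
  constructor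
  · have e : {α : {α : FreeGroup (S ⊕ T) → (CantorSp ≃ₜ CantorSp) //
        ∀ γ γ', α (γ * γ') = (α γ').trans (α γ)} |
        TopologicallyAmenable fun γ (x : CantorSp) => (α.1 γ) x} =
        ⋂ (F : Finset (FreeGroup (S ⊕ T))) (n : ℕ),
          {α | ∃ m : CantorSp → FreeGroup (S ⊕ T) → ℝ,
            (∀ y γ, 0 ≤ m y γ ∧ m y γ ≤ 1) ∧
            (∀ y, (Function.support (m y)).Finite) ∧
            (∀ y, ∑' γ, m y γ = 1) ∧
            (∀ y : CantorSp, ∀ δ : ℝ, 0 < δ → ∃ U : Set CantorSp, IsOpen U ∧ y ∈ U ∧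
              ∀ z ∈ U, (∑' γ, |m y γ - m z γ|) < δ) ∧
            (∀ g ∈ F, ∀ y : CantorSp,
              (∑' h, |m y (g⁻¹ * h) - m (α.1 g y) h|) < 1 / ((n : ℝ) + 1))} := by
      ext α
      simp only [Set.mem_iInter]
      constructor
      · intro h F n
        exact h F _ (by positivity)
      · intro h F ε hε
        obtain ⟨n, hn⟩ := exists_nat_one_div_lt hε
        obtain ⟨m, h1, h2, h3, h4, h5⟩ := h F n
        exact ⟨m, h1, h2, h3, h4, fun g hg y => (h5 g hg y).trans hn⟩
    rw [e]
    refine IsGδ.iInter fun F => IsGδ.iInter fun n => IsOpen.isGδ ?_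
    rw [isOpen_iff_mem_nhds]
    rintro α ⟨m, h1, h2, h3, h4, h5⟩
    have hn : ∀ᶠ β in 𝓝 α, ∀ g ∈ F, ∀ y : CantorSp,
        (∑' h, |m y (g⁻¹ * h) - m (β.1 g y) h|) < 1 / ((n : ℝ) + 1) := by
      rw [Finset.eventually_all]
      intro g hg
      have hcont : Continuous fun β : {α : FreeGroup (S ⊕ T) → (CantorSp ≃ₜ CantorSp) //
          ∀ γ γ', α (γ * γ') = (α γ').trans (α γ)} => β.1 g :=
        (continuous_apply g).comp continuous_subtype_val
      exact ((isOpen_almostEquivariant m h2 h4 g _).preimage hcont).mem_nhds (h5 g hg)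
    filter_upwards [hn] with β hβ
    exact ⟨m, h1, h2, h3, h4, hβ⟩
  · intro α
    obtain ⟨b, hb⟩ := exists_amenable_action (S ⊕ T)
    let β : ℕ → {α : FreeGroup (S ⊕ T) → (CantorSp ≃ₜ CantorSp) //
        ∀ γ γ', α (γ * γ') = (α γ').trans (α γ)} := fun k =>
      ⟨fun γ => mixConj k (α.1 γ) (b γ), fun γ γ' => by
        ext1 x
        simp [mixConj_apply, α.2, map_mul]⟩
    refine mem_closure_of_tendsto (f := β) (b := atTop) ?_ (Eventually.of_forall fun k => ?_)
    · rw [tendsto_subtype_rng, tendsto_pi_nhds]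
      exact fun γ => tendsto_mixConj _ _
    · refine hb.pullback (fun x => ((mixHomeo k).symm x).2)
        (continuous_snd.comp (mixHomeo k).symm.continuous) fun γ x => ?_
      simp [β, mixConj_apply]
end

section
/- Let X = {0,1}^ℕ be the Cantor space, let Γ be the free group on the disjoint union S ⊔ T of two disjoint countably infinite sets S and T, and let Γ_S be the subgroup of Γ generated by S. There exists an action α of Γ on X by homeomorphisms that is free, topologically amenable, and whose restriction to Γ_S is minimal (every Γ_S-orbit is dense in X). -/
/-! ### Brouwer's characterisation of the Cantor space -/

namespace FreeAmenable

section Brouwer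

variable {Y : Type*}

open Classical in
/-- The cell of depth `n` with address `x`: the nested sets obtained by cutting the whole space
successively along the sets `D k (current cell)`, where `x k` says which side is kept. -/
noncomputable def cell (D : ℕ → Set Y → Set Y) (x : ℕ → Bool) : ℕ → Set Y
  | 0 => Set.univ
  | n + 1 => if x n then cell D x n ∩ D n (cell D x n) else cell D x n \ D n (cell D x n)

open Classical in
/-- The cell of depth `n` that contains the point `y`. -/
noncomputable def cellAt (D : ℕ → Set Y → Set Y) (y : Y) : ℕ → Set Y
  | 0 => Set.univ
  | n + 1 => if y ∈ D n (cellAt D y n) then cellAt D y n ∩ D n (cellAt D y n)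
      else cellAt D y n \ D n (cellAt D y n)

open Classical in
/-- The address of the point `y` in the binary tree of cells. -/
noncomputable def address (D : ℕ → Set Y → Set Y) (y : Y) (n : ℕ) : Bool :=
  decide (y ∈ D n (cellAt D y n))

lemma mem_cellAt (D : ℕ → Set Y → Set Y) (y : Y) (n : ℕ) : y ∈ cellAt D y n := by
  induction n with
  | zero => trivial
  | succ n ih => by_cases h : y ∈ D n (cellAt D y n) <;> simp [cellAt, h, ih]

lemma cellAt_eq_cell (D : ℕ → Set Y → Set Y) (y : Y) (n : ℕ) :
    cellAt D y n = cell D (address D y) n := by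
  induction n with
  | zero => rfl
  | succ n ih =>
    by_cases h : y ∈ D n (cellAt D y n) <;> simp [cellAt, cell, address, ← ih, h]

lemma cellAt_congr (D : ℕ → Set Y → Set Y) {y z : Y} {n : ℕ} (h : z ∈ cellAt D y n) :
    cellAt D z n = cellAt D y n ∧ ∀ k < n, address D z k = address D y k := by
  induction n with
  | zero => exact ⟨rfl, by simp⟩
  | succ n ih =>
    have hz : z ∈ cellAt D y n := by
      by_cases hy : y ∈ D n (cellAt D y n) <;> simp only [cellAt, hy, if_true, if_false] at h
      exacts [h.1, h.1]
    obtain ⟨h1, h2⟩ := ih hz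
    have h3 : z ∈ D n (cellAt D y n) ↔ y ∈ D n (cellAt D y n) := by
      by_cases hy : y ∈ D n (cellAt D y n) <;> simp only [cellAt, hy, if_true, if_false] at h
      · exact ⟨fun _ => hy, fun _ => h.2⟩
      · exact ⟨fun h' => absurd h' h.2, fun h' => absurd h' hy⟩
    have h4 : z ∈ D n (cellAt D z n) ↔ y ∈ D n (cellAt D y n) := by rw [h1, h3]
    refine ⟨?_, fun k hk => ?_⟩
    · by_cases hy : y ∈ D n (cellAt D y n)
      · simp only [cellAt, if_pos hy, if_pos (h4.2 hy), h1]
      · simp only [cellAt, if_neg hy, if_neg (mt h4.1 hy), h1]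
    rcases Nat.lt_succ_iff_lt_or_eq.mp hk with hk | rfl
    · exact h2 k hk
    · exact decide_eq_decide.mpr h4

lemma address_eq (D : ℕ → Set Y → Set Y) {y : Y} {x : ℕ → Bool} (h : ∀ n, y ∈ cell D x n) :
    address D y = x := by
  have key : ∀ n, cellAt D y n = cell D x n → address D y n = x n := by
    intro n hn
    have h1 := h (n + 1)
    cases hx : x n <;> simp [cell, hx] at h1 <;> simp [address, hn, h1]
  have : ∀ n, cellAt D y n = cell D x n := by
    intro n
    induction n with
    | zero => rfl
    | succ n ih =>
      have := key n ih
      rw [cellAt_eq_cell] at ih ⊢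
      simp only [cell, ih, this]
  exact funext fun n => key n (this n)

/-- A nonempty compact space with a sequence of clopen sets `V n` separating points, and such that
every nonempty clopen set is cut nontrivially by some `V n`, is homeomorphic to the Cantor space.
At depth `n` each cell is cut along `V n` if possible, and otherwise (when the cell already lies on
one side of `V n`) along any `V m` that cuts it. -/
theorem nonempty_homeomorph_cantor [TopologicalSpace Y] [CompactSpace Y] [Nonempty Y]
    (V : ℕ → Set Y) (hV : ∀ n, IsClopen (V n))
    (hsep : ∀ y z, (∀ n, y ∈ V n ↔ z ∈ V n) → y = z)
    (hcut : ∀ C : Set Y, IsClopen C → C.Nonempty →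
      ∃ n, (C ∩ V n).Nonempty ∧ (C \ V n).Nonempty) :
    Nonempty (Y ≃ₜ (ℕ → Bool)) := by
  have hD : ∀ (n : ℕ) (C : Set Y), ∃ D : Set Y, IsClopen D ∧
      (IsClopen C → C.Nonempty → (C ∩ D).Nonempty ∧ (C \ D).Nonempty) ∧
      (((C ∩ V n).Nonempty ∧ (C \ V n).Nonempty) → D = V n) := by
    intro n C
    by_cases h : (C ∩ V n).Nonempty ∧ (C \ V n).Nonempty
    · exact ⟨V n, hV n, fun _ _ => h, fun _ => rfl⟩
    · by_cases hC : IsClopen C ∧ C.Nonempty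
      · obtain ⟨m, hm⟩ := hcut C hC.1 hC.2
        exact ⟨V m, hV m, fun _ _ => hm, fun h' => absurd h' h⟩
      · exact ⟨V n, hV n, fun h1 h2 => absurd ⟨h1, h2⟩ hC, fun h' => absurd h' h⟩
  choose D hDc hDcut hDV using hD
  have hcell : ∀ x n, IsClopen (cell D x n) ∧ (cell D x n).Nonempty := by
    intro x n
    induction n with
    | zero => exact ⟨isClopen_univ, Set.univ_nonempty⟩
    | succ n ih =>
      have := hDcut n _ ih.1 ih.2
      cases hx : x n <;> simp only [cell, hx, if_true, Bool.false_eq_true, if_false]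
      · exact ⟨ih.1.diff (hDc _ _), this.2⟩
      · exact ⟨ih.1.inter (hDc _ _), this.1⟩
  have hanti : ∀ x n, cell D x (n + 1) ⊆ cell D x n := by
    intro x n
    cases hx : x n <;> simp [cell, hx]
  have hside : ∀ y z, address D y = address D z → ∀ n, y ∈ V n → z ∈ V n := by
    intro y z h n hy
    have hz : z ∈ cellAt D y n := by
      rw [cellAt_eq_cell, h, ← cellAt_eq_cell]; exact mem_cellAt D z n
    by_contra hzV
    have hDn : D n (cellAt D y n) = V n := hDV n _ ⟨⟨y, mem_cellAt D y n, hy⟩, ⟨z, hz, hzV⟩⟩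
    have := congrFun h n
    simp only [address, (cellAt_congr D hz).1, hDn, hy, hzV] at this
    simp at this
  have hbij : Function.Bijective (address D) := by
    refine ⟨fun y z h => hsep y z fun n => ⟨hside y z h n, hside z y h.symm n⟩, fun x => ?_⟩
    obtain ⟨y, hy⟩ := IsCompact.nonempty_iInter_of_sequence_nonempty_isCompact_isClosed
      (cell D x) (hanti x) (fun n => (hcell x n).2) (hcell x 0).1.isClosed.isCompact
      (fun n => (hcell x n).1.isClosed)
    exact ⟨y, address_eq D (Set.mem_iInter.mp hy)⟩
  have hcont : Continuous (address D) := by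
    refine continuous_pi fun n => IsLocallyConstant.continuous ?_
    refine (IsLocallyConstant.iff_exists_open _).2 fun y => ⟨cellAt D y (n + 1), ?_,
      mem_cellAt D y _, fun z hz => (cellAt_congr D hz).2 n n.lt_succ_self⟩
    rw [cellAt_eq_cell]; exact (hcell _ _).1.isOpen
  exact ⟨Continuous.homeoOfEquivCompactToT2 (f := Equiv.ofBijective _ hbij) hcont⟩

end Brouwer

/-! ### Words in the free group -/

section Words

variable {I : Type*}

open Classical in
/-- Left multiplication by a generator either prepends its letter to the reduced word or
cancels the first letter. -/
lemma toWord_of_mul_cases (i : I) (g : FreeGroup I) :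
    (FreeGroup.of i * g).toWord = (i, true) :: g.toWord ∨
      g.toWord = (i, false) :: (FreeGroup.of i * g).toWord := by
  have h : (FreeGroup.of i * g).toWord = FreeGroup.reduce ((i, true) :: g.toWord) := by
    rw [FreeGroup.toWord_mul, FreeGroup.toWord_of]; rfl
  rw [h, FreeGroup.reduce.cons, FreeGroup.reduce_toWord]
  rcases g.toWord with _ | ⟨⟨k, b⟩, w⟩
  · simp
  · by_cases hk : i = k
    · subst hk; cases b <;> simp
    · simp [hk]

open Classical in
/-- The projection of the free group onto the subgroup generated by a set `L` of letters that takes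
the longest initial segment with letters in `L`: it is equivariant for that subgroup, and each edge
`g — i g` of the Cayley graph with `i ∉ L` has an end that is sent to `1`. -/
lemma exists_projection (L : Set I) : ∃ π : FreeGroup I → FreeGroup I,
    (∀ h ∈ Subgroup.closure (FreeGroup.of '' L), ∀ g, π (h * g) = h * π g) ∧
    ∀ i ∉ L, ∀ g, π g = 1 ∨ π (FreeGroup.of i * g) = 1 := by
  let π : FreeGroup I → FreeGroup I := fun g =>
    FreeGroup.mk (g.toWord.takeWhile fun x => decide (x.1 ∈ L))
  refine ⟨π, ?_, ?_⟩
  · intro h hh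
    induction hh using Subgroup.closure_induction with
    | mem x hx =>
      obtain ⟨i, hi, rfl⟩ := hx
      intro g
      rcases toWord_of_mul_cases i g with h | h
      · simp only [π, h, List.takeWhile_cons, hi, decide_true, if_true]
        rw [FreeGroup.of, FreeGroup.mul_mk]; rfl
      · simp only [π, h, List.takeWhile_cons, hi, decide_true, if_true]
        rw [eq_comm, ← eq_inv_mul_iff_mul_eq, FreeGroup.of, FreeGroup.inv_mk, FreeGroup.mul_mk]
        rfl
    | one => simp
    | mul x y _ _ hx hy => intro g; rw [mul_assoc, hx, hy, mul_assoc]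
    | inv x _ hx => intro g; rw [eq_inv_mul_iff_mul_eq, ← hx, mul_inv_cancel_left]
  · intro i hi g
    rcases toWord_of_mul_cases i g with h | h
    · right; simp [π, h, hi]; rfl
    · left; simp [π, h, hi]; rfl

/-- Every element other than `1` admits a two-colouring of the group which changes along each
edge `g — γ g`: take the parity of the position in the `γ`-orbit, which is a copy of `ℤ`. -/
lemma exists_coloring {γ : FreeGroup I} (hγ : γ ≠ 1) :
    ∃ c : FreeGroup I → Bool, ∀ g, c (γ * g) ≠ c g := by
  let r : FreeGroup I → FreeGroup I := fun g =>
    (Quotient.mk (QuotientGroup.rightRel (Subgroup.zpowers γ)) g).out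
  have hr : ∀ g, ∃ k : ℤ, g = γ ^ k * r g := by
    intro g
    have h : (QuotientGroup.rightRel (Subgroup.zpowers γ)) (r g) g := Quotient.mk_out g
    rw [QuotientGroup.rightRel_apply] at h
    obtain ⟨k, hk⟩ := Subgroup.mem_zpowers_iff.mp h
    exact ⟨k, by rw [hk]; group⟩
  have hr' : ∀ g, r (γ * g) = r g := by
    intro g
    refine congrArg Quotient.out (Quotient.sound ?_)
    change (QuotientGroup.rightRel (Subgroup.zpowers γ)) _ _
    rw [QuotientGroup.rightRel_apply]
    simp
  choose k hk using hr
  have hk1 : ∀ g, k (γ * g) = k g + 1 := by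
    intro g
    have h1 := hk (γ * g)
    rw [hr'] at h1
    have h2 : γ ^ (k (γ * g)) = γ ^ (k g + 1) := by
      apply mul_right_cancel (b := r g)
      rw [← h1, add_comm, zpow_add, zpow_one, mul_assoc, ← hk g]
    exact injective_zpow_iff_not_isOfFinOrder.mpr (by rwa [isOfFinOrder_iff_eq_one]) h2
  refine ⟨fun g => decide (Even (k g)), fun g => ?_⟩
  simp only [hk1, Int.even_add_one]
  by_cases h : Even (k g) <;> simp [h]

open Classical in
/-- For a finite set `B` of letters, each vertex of the Cayley graph points along an edge towards
the root `1` if that edge is labelled in `B`; every edge labelled in `B` is then followed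
from one of its ends. The value `none` means that the vertex points nowhere. -/
lemma exists_pointer (B : Finset I) : ∃ d : FreeGroup I → Option (B × Bool),
    ∀ g, ∀ i : B, d g = some (i, true) ∨ d (FreeGroup.of i.1 * g) = some (i, false) := by
  refine ⟨fun g => g.toWord.head?.bind fun x =>
    if h : x.1 ∈ B then some (⟨x.1, h⟩, !x.2) else none, fun g i => ?_⟩
  rcases toWord_of_mul_cases i.1 g with h | h
  · right; simp [h]
  · left; simp [h]

end Words

/-! ### Amenability from pointers -/

section Amenability

variable {G Y : Type*} [Group G] [MulAction G Y]

/-- `walk δ k y` is the inverse of the group element that carries `y` to the `k`-th point of the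
trajectory `y, δ(y) • y, …` of the map `y ↦ δ(y) • y`. -/
def walk (δ : Y → G) : ℕ → Y → G
  | 0, _ => 1
  | k + 1, y => (δ y)⁻¹ * walk δ k (δ y • y)

open Classical in
/-- The uniform distribution on the first `N + 1` terms of the walk started at `y`. -/
noncomputable def mass (δ : Y → G) (N : ℕ) (y : Y) (h : G) : ℝ :=
  ((N : ℝ) + 1)⁻¹ * ∑ k ∈ Finset.range (N + 1), if h = walk δ k y then 1 else 0

/-- The `ℓ¹`-distance between the translate by `g` of the mass at `y` and the mass at `g • y`. -/
noncomputable def defect (δ : Y → G) (N : ℕ) (g : G) (y : Y) : ℝ :=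
  ∑' h, |mass δ N y (g⁻¹ * h) - mass δ N (g • y) h|

lemma mass_nonneg (δ : Y → G) (N : ℕ) (y : Y) (h : G) : 0 ≤ mass δ N y h := by
  unfold mass
  exact mul_nonneg (by positivity) (Finset.sum_nonneg fun k _ => by split_ifs <;> simp)

lemma mass_le_one (δ : Y → G) (N : ℕ) (y : Y) (h : G) : mass δ N y h ≤ 1 := by
  classical
  unfold mass
  rw [inv_mul_le_iff₀ (by positivity), mul_one]
  calc _ ≤ ∑ k ∈ Finset.range (N + 1), (1 : ℝ) :=
        Finset.sum_le_sum fun k _ => by split_ifs <;> simp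
    _ = _ := by simp

lemma support_mass (δ : Y → G) (N : ℕ) (y : Y) : (Function.support (mass δ N y)).Finite := by
  classical
  refine ((Finset.range (N + 1)).image fun k => walk δ k y).finite_toSet.subset fun h hh => ?_
  by_contra hn
  refine hh ?_
  unfold mass
  rw [Finset.sum_eq_zero, mul_zero]
  intro k hk
  rw [if_neg]
  rintro rfl
  exact hn (Finset.mem_coe.2 (Finset.mem_image_of_mem _ hk))

lemma tsum_mass (δ : Y → G) (N : ℕ) (y : Y) : ∑' h, mass δ N y h = 1 := by
  classical
  unfold mass
  rw [tsum_mul_left, Summable.tsum_finsetSum]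
  · simp only [tsum_ite_eq]
    simp only [Finset.sum_const, Finset.card_range, nsmul_eq_mul, mul_one]
    push_cast
    exact inv_mul_cancel₀ (by positivity)
  · intro k _
    exact (hasSum_ite_eq _ _).summable

lemma support_translate (δ : Y → G) (N : ℕ) (y : Y) (g : G) :
    (Function.support fun h => mass δ N y (g * h)).Finite :=
  (support_mass δ N y).preimage (mul_right_injective g).injOn

lemma summable_defect (δ : Y → G) (N : ℕ) (y z : Y) (g g' : G) :
    Summable fun h => |mass δ N y (g * h) - mass δ N z (g' * h)| := by
  refine summable_of_hasFiniteSupport (((support_translate δ N y g).union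
    (support_translate δ N z g')).subset fun h hh => ?_)
  by_contra hn
  simp only [Set.mem_union, Function.mem_support, not_or, not_not] at hn
  exact hh (by simp [hn.1, hn.2])

lemma defect_mul_le (δ : Y → G) (N : ℕ) (g g' : G) (y : Y) :
    defect δ N (g * g') y ≤ defect δ N g (g' • y) + defect δ N g' y := by
  have h1 : defect δ N g' y =
      ∑' h, |mass δ N y (g'⁻¹ * (g⁻¹ * h)) - mass δ N (g' • y) (g⁻¹ * h)| :=
    ((Equiv.mulLeft g⁻¹).tsum_eq
      fun h => |mass δ N y (g'⁻¹ * h) - mass δ N (g' • y) h|).symm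
  have s1 := summable_defect δ N y (g' • y) (g'⁻¹ * g⁻¹) g⁻¹
  have s2 := summable_defect δ N (g' • y) (g • g' • y) g⁻¹ 1
  have s3 := summable_defect δ N y (g • g' • y) (g'⁻¹ * g⁻¹) 1
  simp only [mul_assoc, one_mul] at s1 s2 s3
  rw [h1, defect, defect, ← s2.tsum_add s1]
  simp only [mul_inv_rev, mul_assoc, mul_smul]
  refine s3.tsum_le_tsum (fun h => ?_) (s2.add s1)
  rw [add_comm]
  exact abs_sub_le _ _ _

lemma defect_inv (δ : Y → G) (N : ℕ) (g : G) (y : Y) :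
    defect δ N g⁻¹ y = defect δ N g (g⁻¹ • y) := by
  rw [defect, ← (Equiv.mulLeft g⁻¹).tsum_eq, defect]
  refine tsum_congr fun h => ?_
  rw [smul_inv_smul, abs_sub_comm]
  simp

/-- If `y` points to `g • y` or `g • y` points to `y`, the two trajectories differ by a shift of
one step, so all but one term of each walk cancel in the defect. -/
lemma defect_le_of_pointer (δ : Y → G) (N : ℕ) (g : G) (y : Y)
    (h : δ y = g ∨ δ (g • y) = g⁻¹) : defect δ N g y ≤ 2 / ((N : ℝ) + 1) := by
  classical
  have key : ∃ a b : G, ∀ h, |mass δ N y (g⁻¹ * h) - mass δ N (g • y) h| ≤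
      ((N : ℝ) + 1)⁻¹ * ((if h = a then 1 else 0) + if h = b then 1 else 0) := by
    have hab : ∀ (a b : Prop) [Decidable a] [Decidable b] (t : ℝ),
        |(t + if a then 1 else 0) - (t + if b then 1 else 0)| ≤
          (if a then 1 else 0) + if b then 1 else 0 := by
      intro a b _ _ t; split_ifs <;> simp
    rcases h with h | h
    · refine ⟨g, walk δ N (g • y), fun x => ?_⟩
      unfold mass
      rw [← mul_sub, abs_mul, abs_of_nonneg (by positivity)]
      refine mul_le_mul_of_nonneg_left ?_ (by positivity)
      rw [Finset.sum_range_succ', Finset.sum_range_succ]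
      simp only [walk, h, mul_right_inj, inv_mul_eq_iff_eq_mul, mul_one]
      exact hab _ _ _
    · refine ⟨g * walk δ N y, 1, fun x => ?_⟩
      unfold mass
      rw [← mul_sub, abs_mul, abs_of_nonneg (by positivity)]
      refine mul_le_mul_of_nonneg_left ?_ (by positivity)
      rw [Finset.sum_range_succ, Finset.sum_range_succ']
      simp only [walk, h, inv_inv, inv_smul_smul, inv_mul_eq_iff_eq_mul]
      exact hab _ _ _
  obtain ⟨a, b, hab⟩ := key
  have ha : HasSum (fun h : G => if h = a then (1 : ℝ) else 0) 1 := hasSum_ite_eq a 1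
  have hb : HasSum (fun h : G => if h = b then (1 : ℝ) else 0) 1 := hasSum_ite_eq b 1
  have hs := (ha.add hb).mul_left ((N : ℝ) + 1)⁻¹
  have s1 := summable_defect δ N y (g • y) g⁻¹ 1
  simp only [one_mul] at s1
  refine (s1.tsum_le_tsum hab hs.summable).trans (le_of_eq ?_)
  rw [hs.tsum_eq]; ring

lemma isLocallyConstant_walk [TopologicalSpace Y] [ContinuousConstSMul G Y] {δ : Y → G}
    (hδ : IsLocallyConstant δ) (k : ℕ) : IsLocallyConstant (walk δ k) := by
  induction k with
  | zero => exact IsLocallyConstant.const 1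
  | succ k ih =>
    rw [IsLocallyConstant.iff_exists_open] at ih ⊢
    intro y
    obtain ⟨U, hU, hyU, hU'⟩ := ih (δ y • y)
    refine ⟨δ ⁻¹' {δ y} ∩ (fun z => δ y • z) ⁻¹' U, (hδ _).inter
      (hU.preimage (continuous_const_smul _)), ⟨rfl, hyU⟩, fun z hz => ?_⟩
    have h1 : δ z = δ y := hz.1
    simp only [walk, h1]
    rw [hU' _ hz.2]

lemma isLocallyConstant_mass [TopologicalSpace Y] [ContinuousConstSMul G Y] {δ : Y → G}
    (hδ : IsLocallyConstant δ) (N : ℕ) : IsLocallyConstant (mass δ N) := by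
  have h : ∀ n : ℕ, IsLocallyConstant
      fun y (h : G) => ∑ k ∈ Finset.range n, open Classical in
        if h = walk δ k y then (1 : ℝ) else 0 := by
    intro n
    induction n with
    | zero => exact IsLocallyConstant.const (fun _ => (0 : ℝ))
    | succ n ih =>
      simp only [Finset.sum_range_succ]
      exact ih.add ((isLocallyConstant_walk hδ n).comp
        fun a (h : G) => open Classical in if h = a then (1 : ℝ) else 0)
  exact (h (N + 1)).comp fun f h => ((N : ℝ) + 1)⁻¹ * f h

/-- An action of a free group is topologically amenable if for each finite set `B` of generators
there is a locally constant choice of a direction `δ(y)` such that each edge `y — i • y` of the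
orbit graph with `i ∈ B` is followed from one of its ends. -/
theorem topologicallyAmenable_of_pointers {I : Type*} [MulAction (FreeGroup I) Y]
    [TopologicalSpace Y] [ContinuousConstSMul (FreeGroup I) Y]
    (H : ∀ B : Finset I, ∃ δ : Y → FreeGroup I, IsLocallyConstant δ ∧ ∀ i ∈ B, ∀ y,
      δ y = FreeGroup.of i ∨ δ (FreeGroup.of i • y) = (FreeGroup.of i)⁻¹) :
    TopologicallyAmenable (fun (g : FreeGroup I) (y : Y) => g • y) := by
  classical
  intro F ε hε
  -- the finitely many generators that occur in the elements of `F`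
  let B : Finset I := F.biUnion fun g => (g.toWord.map Prod.fst).toFinset
  obtain ⟨δ, hδ, hB⟩ := H B
  let K : Subgroup (FreeGroup I) :=
    { carrier := {g | ∃ C : ℝ, ∀ (N : ℕ) (y : Y), defect δ N g y ≤ C / ((N : ℝ) + 1)}
      one_mem' := ⟨0, fun N y => by simp [defect]⟩
      mul_mem' := by
        rintro a b ⟨C, hC⟩ ⟨C', hC'⟩
        refine ⟨C + C', fun N y => (defect_mul_le δ N a b y).trans ?_⟩
        rw [add_div]
        exact add_le_add (hC _ _) (hC' _ _)
      inv_mem' := by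
        rintro a ⟨C, hC⟩
        exact ⟨C, fun N y => by rw [defect_inv]; exact hC _ _⟩ }
  have hBK : ∀ i ∈ B, FreeGroup.of i ∈ K := fun i hi =>
    ⟨2, fun N y => defect_le_of_pointer δ N _ y (hB i hi y)⟩
  have hmk : ∀ w : List (I × Bool), (∀ x ∈ w, x.1 ∈ B) → FreeGroup.mk w ∈ K := by
    intro w
    induction w with
    | nil => intro _; exact K.one_mem
    | cons x w ih =>
      intro hw
      have hx : FreeGroup.mk [x] ∈ K := by
        obtain ⟨i, b⟩ := x
        have := hBK i (hw (i, b) (by simp))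
        cases b
        · rw [show FreeGroup.mk [(i, false)] = (FreeGroup.of i)⁻¹ from rfl]
          exact inv_mem this
        · rwa [show FreeGroup.mk [(i, true)] = FreeGroup.of i from rfl]
      have := K.mul_mem hx (ih fun y hy => hw y (by simp [hy]))
      rwa [FreeGroup.mul_mk] at this
  have hFK : ∀ g ∈ F, g ∈ K := by
    intro g hg
    rw [← FreeGroup.mk_toWord (x := g)]
    refine hmk _ fun x hx => Finset.mem_biUnion.2 ⟨g, hg, ?_⟩
    exact List.mem_toFinset.2 (List.mem_map_of_mem hx)
  have hN : ∃ N : ℕ, ∀ g ∈ F, ∀ y, defect δ N g y < ε := by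
    choose! C hC using hFK
    obtain ⟨N, hN⟩ := exists_nat_gt ((∑ g ∈ F, |C g|) / ε)
    refine ⟨N, fun g hg y => (hC g hg N y).trans_lt ?_⟩
    rw [div_lt_iff₀ (by positivity)]
    rw [div_lt_iff₀ hε] at hN
    have h1 : |C g| ≤ ∑ g ∈ F, |C g| :=
      Finset.single_le_sum (f := fun g => |C g|) (fun _ _ => abs_nonneg _) hg
    nlinarith [le_abs_self (C g)]
  obtain ⟨N, hN⟩ := hN
  refine ⟨mass δ N, fun y γ => ⟨mass_nonneg δ N y γ, mass_le_one δ N y γ⟩, support_mass δ N,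
    tsum_mass δ N, fun y η hη => ?_, hN⟩
  obtain ⟨U, hU, hyU, hU'⟩ :=
    (IsLocallyConstant.iff_exists_open _).1 (isLocallyConstant_mass hδ N) y
  exact ⟨U, hU, hyU, fun z hz => by simpa [hU' z hz] using hη⟩

end Amenability

/-! ### Subshifts with an imposed minimality -/

section Subshift

variable {I J : Type*} {A : J → Type*}

/-- The right translation action on configurations: `shift g φ` is `φ` seen from the vertex `g`. -/
def shift (g : FreeGroup I) (φ : ∀ p : J × FreeGroup I, A p.1) : ∀ p : J × FreeGroup I, A p.1 :=
  fun p => φ (p.1, p.2 * g)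

lemma shift_one (φ : ∀ p : J × FreeGroup I, A p.1) : shift 1 φ = φ := by
  funext p; exact congrArg (β := A p.1) (fun h => φ (p.1, h)) (mul_one p.2)

lemma shift_mul (g g' : FreeGroup I) (φ : ∀ p : J × FreeGroup I, A p.1) :
    shift (g * g') φ = shift g (shift g' φ) := by
  funext p; exact congrArg (β := A p.1) (fun h => φ (p.1, h)) (mul_assoc p.2 g g').symm

lemma continuous_shift [∀ j, TopologicalSpace (A j)] (g : FreeGroup I) :
    Continuous (shift g : (∀ p : J × FreeGroup I, A p.1) → _) :=
  continuous_pi fun p => continuous_apply (p.1, p.2 * g)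

/-- The subgroup generated by a set of letters. -/
abbrev letterGroup (L : Set I) : Subgroup (FreeGroup I) := Subgroup.closure (FreeGroup.of '' L)

lemma letterGroup_mono {L : ℕ → Set I} (hL : Monotone L) {m n : ℕ} (h : m ≤ n) :
    letterGroup (L m) ≤ letterGroup (L n) :=
  Subgroup.closure_mono (Set.image_mono (hL h))

lemma exists_mem_letterGroup {L : ℕ → Set I} (hL : Monotone L) (hLtop : ∀ i, ∃ n, i ∈ L n)
    (g : FreeGroup I) : ∃ n, g ∈ letterGroup (L n) := by
  induction g using FreeGroup.induction_on with
  | C1 => exact ⟨0, one_mem _⟩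
  | of i =>
    obtain ⟨n, hn⟩ := hLtop i
    exact ⟨n, Subgroup.subset_closure ⟨i, hn, rfl⟩⟩
  | inv_of i h =>
    obtain ⟨n, hn⟩ := h
    exact ⟨n, inv_mem hn⟩
  | mul x y hx hy =>
    obtain ⟨m, hm⟩ := hx
    obtain ⟨n, hn⟩ := hy
    exact ⟨max m n, mul_mem (letterGroup_mono hL (le_max_left _ _) hm)
      (letterGroup_mono hL (le_max_right _ _) hn)⟩

/-- Equivariance of a map of the free group under left multiplication by the group of `L`. -/
def IsEquivariant (L : Set I) (π : FreeGroup I → FreeGroup I) : Prop :=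
  ∀ h ∈ letterGroup L, ∀ g, π (h * g) = h * π g

open Classical in
/-- Precompose with `π` the coordinates of level at most `n`, and keep the others. -/
noncomputable def pull (l : J → ℕ) (n : ℕ) (π : FreeGroup I → FreeGroup I)
    (φ : ∀ p : J × FreeGroup I, A p.1) : ∀ p : J × FreeGroup I, A p.1 :=
  fun p => if l p.1 ≤ n then φ (p.1, π p.2) else φ p

/-- `U` depends only on the coordinates of level at most `n` at places in the group of `L`. -/
def DependsOn (l : J → ℕ) (L : Set I) (n : ℕ) (U : Set (∀ p : J × FreeGroup I, A p.1)) : Prop :=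
  ∀ φ ψ, (∀ p : J × FreeGroup I, l p.1 ≤ n → p.2 ∈ letterGroup L → φ p = ψ p) →
    φ ∈ U → ψ ∈ U

/-- From a vertex `g`, the pulled back configuration looks in `U` like the original one does
from the vertex `π g`. -/
lemma shift_pull_mem_iff {l : J → ℕ} {L : Set I} {n : ℕ}
    {U : Set (∀ p : J × FreeGroup I, A p.1)} (hU : DependsOn l L n U)
    {π : FreeGroup I → FreeGroup I} (hπ : IsEquivariant L π)
    (φ : ∀ p : J × FreeGroup I, A p.1) (g : FreeGroup I) :
    shift g (pull l n π φ) ∈ U ↔ shift (π g) φ ∈ U := by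
  have h : ∀ p : J × FreeGroup I, l p.1 ≤ n → p.2 ∈ letterGroup L →
      shift g (pull l n π φ) p = shift (π g) φ p := by
    intro p hp hp'
    simp only [shift, pull, if_pos hp]
    exact congrArg (β := A p.1) (fun h => φ (p.1, h)) (hπ _ hp' g)
  exact ⟨hU _ _ h, hU _ _ fun p hp hp' => (h p hp hp').symm⟩

/-- The successive restrictions of `B`: at step `k`, if some remaining configuration lies in `U k`,
require that from each vertex `g` one of `g` and `(s k) g` sees `U k`. -/
def stage (B : Set (∀ p : J × FreeGroup I, A p.1))
    (U : ℕ → Set (∀ p : J × FreeGroup I, A p.1)) (s : ℕ → I) :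
    ℕ → Set (∀ p : J × FreeGroup I, A p.1)
  | 0 => B
  | k + 1 => {φ | φ ∈ stage B U s k ∧ ((stage B U s k ∩ U k).Nonempty →
      ∀ g, shift g φ ∈ U k ∨ shift (FreeGroup.of (s k) * g) φ ∈ U k)}

variable {B : Set (∀ p : J × FreeGroup I, A p.1)} {U : ℕ → Set (∀ p : J × FreeGroup I, A p.1)}
  {s : ℕ → I}

lemma shift_mem_stage (hB : ∀ g, ∀ φ ∈ B, shift g φ ∈ B) (k : ℕ) (g : FreeGroup I)
    {φ : ∀ p : J × FreeGroup I, A p.1} (hφ : φ ∈ stage B U s k) : shift g φ ∈ stage B U s k := by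
  induction k with
  | zero => exact hB g φ hφ
  | succ k ih =>
    refine ⟨ih hφ.1, fun hne g' => ?_⟩
    rw [← shift_mul, ← shift_mul, mul_assoc]
    exact hφ.2 hne _

lemma isClosed_stage [∀ j, TopologicalSpace (A j)] (hB : IsClosed B) (hU : ∀ k, IsClosed (U k))
    (k : ℕ) : IsClosed (stage B U s k) := by
  induction k with
  | zero => exact hB
  | succ k ih =>
    refine ih.inter ?_
    by_cases hne : (stage B U s k ∩ U k).Nonempty
    · simp only [hne, true_imp_iff]
      change IsClosed {φ | _}
      simp only [Set.ofPred_forall]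
      exact isClosed_iInter fun g => ((hU k).preimage (continuous_shift g)).union
        ((hU k).preimage (continuous_shift _))
    · simp only [hne, false_imp_iff]
      exact isClosed_univ

lemma pull_mem_stage {l : J → ℕ} {L : ℕ → Set I} {N : ℕ → ℕ}
    (hBpull : ∀ n π, IsEquivariant (L n) π → ∀ φ ∈ B, pull l n π φ ∈ B)
    (hN : StrictMono N) (hdep : ∀ k n, N k ≤ n → DependsOn l (L n) n (U k))
    (hs : ∀ k n, N k < n → s k ∈ L n) (k n : ℕ) (hn : N k ≤ n) {π : FreeGroup I → FreeGroup I}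
    (hπ : IsEquivariant (L n) π) {φ : ∀ p : J × FreeGroup I, A p.1} (hφ : φ ∈ stage B U s k) :
    pull l n π φ ∈ stage B U s k := by
  induction k with
  | zero => exact hBpull n π hπ φ hφ
  | succ k ih =>
    have hk : N k < n := (hN k.lt_succ_self).trans_le hn
    refine ⟨ih hk.le hφ.1, fun hne g => ?_⟩
    have hsk : FreeGroup.of (s k) ∈ letterGroup (L n) :=
      Subgroup.subset_closure ⟨_, hs k n hk, rfl⟩
    rw [shift_pull_mem_iff (hdep k n hk.le) hπ, shift_pull_mem_iff (hdep k n hk.le) hπ, hπ _ hsk]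
    exact hφ.2 hne _

/-- If a configuration of stage `k` lies in `U k`, pulling it back along the projection onto the
subgroup of the letters used so far gives one in which every edge labelled by the fresh letter
`s k` has an end that sees `U k`. -/
lemma stage_nonempty {l : J → ℕ} {L : ℕ → Set I} {N : ℕ → ℕ} (hBne : B.Nonempty)
    (hBpull : ∀ n π, IsEquivariant (L n) π → ∀ φ ∈ B, pull l n π φ ∈ B)
    (hN : StrictMono N) (hdep : ∀ k n, N k ≤ n → DependsOn l (L n) n (U k))
    (hs : ∀ k n, N k < n → s k ∈ L n) (hs' : ∀ k, s k ∉ L (N k)) (k : ℕ) :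
    (stage B U s k).Nonempty := by
  induction k with
  | zero => exact hBne
  | succ k ih =>
    by_cases hne : (stage B U s k ∩ U k).Nonempty
    · obtain ⟨φ, hφ, hφU⟩ := hne
      obtain ⟨π, hπ, hπ'⟩ := exists_projection (L (N k))
      refine ⟨pull l (N k) π φ, pull_mem_stage hBpull hN hdep hs k _ le_rfl hπ hφ,
        fun _ g => ?_⟩
      rw [shift_pull_mem_iff (hdep k _ le_rfl) hπ, shift_pull_mem_iff (hdep k _ le_rfl) hπ]
      rcases hπ' (s k) (hs' k) g with h | h
      · left; rwa [h, shift_one]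
      · right; rwa [h, shift_one]
    · obtain ⟨φ, hφ⟩ := ih
      exact ⟨φ, hφ, fun h => absurd h hne⟩

/-- A nonempty closed shift-invariant set `B` of configurations that is stable under `pull l n π` for
all maps `π` equivariant for the letters of `L n` contains a nonempty closed
invariant set `X` such that for every nonempty relatively open part of `X` a single letter of the
sequence `s` moves its complement into it. -/
theorem exists_subshift [Countable I] [Countable J] [∀ j, Finite (A j)]
    [∀ j, TopologicalSpace (A j)] [∀ j, DiscreteTopology (A j)]
    (l : J → ℕ) (L : ℕ → Set I) (hL : Monotone L) (hLtop : ∀ i, ∃ n, i ∈ L n)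
    (s : ℕ → I) (hs : ∀ n, s n ∈ L (n + 1)) (hs' : ∀ n, s n ∉ L n)
    (hBne : B.Nonempty) (hBc : IsClosed B) (hB : ∀ g, ∀ φ ∈ B, shift g φ ∈ B)
    (hBpull : ∀ n π, IsEquivariant (L n) π → ∀ φ ∈ B, pull l n π φ ∈ B) :
    ∃ X : Set (∀ p : J × FreeGroup I, A p.1), X ⊆ B ∧ X.Nonempty ∧ IsClosed X ∧
      (∀ g, ∀ φ ∈ X, shift g φ ∈ X) ∧
      ∀ V, IsOpen V → (V ∩ X).Nonempty →
        ∃ n, ∀ φ ∈ X, φ ∈ V ∨ shift (FreeGroup.of (s n)) φ ∈ V := by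
  have hGmono : ∀ {m n}, m ≤ n → letterGroup (L m) ≤ letterGroup (L n) :=
    fun h => letterGroup_mono hL h
  have hG := exists_mem_letterGroup hL hLtop
  choose rk hrk using hG
  have : Countable (FreeGroup I) := Quotient.countable
  have : Nonempty (Σ E : Finset (J × FreeGroup I), ∀ p : E, A p.1.1) :=
    ⟨⟨∅, fun p => absurd p.2 (Finset.notMem_empty _)⟩⟩
  -- an enumeration of the cylinder sets
  obtain ⟨c, hc⟩ := exists_surjective_nat
    (Σ E : Finset (J × FreeGroup I), ∀ p : E, A p.1.1)
  let U : ℕ → Set (∀ p : J × FreeGroup I, A p.1) := fun k => {φ | ∀ p : (c k).1, φ p = (c k).2 p}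
  let r : ℕ → ℕ := fun k => (c k).1.sup fun p => max (l p.1) (rk p.2)
  let N : ℕ → ℕ := fun k => k + ∑ i ∈ Finset.range (k + 1), r i
  have hN : StrictMono N := strictMono_nat_of_lt_succ fun k => by
    simp only [N, Finset.sum_range_succ _ (k + 1)]; omega
  have hrN : ∀ k, r k ≤ N k := fun k =>
    (Finset.single_le_sum (f := r) (fun _ _ => Nat.zero_le _)
      (Finset.self_mem_range_succ k)).trans (Nat.le_add_left _ _)
  have hdep : ∀ k n, N k ≤ n → DependsOn l (L n) n (U k) := by
    intro k n hn φ ψ h hφ p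
    have h1 : max (l p.1.1) (rk p.1.2) ≤ r k :=
      Finset.le_sup (f := fun p : J × FreeGroup I => max (l p.1) (rk p.2)) p.2
    have h2 : max (l p.1.1) (rk p.1.2) ≤ n := h1.trans ((hrN k).trans hn)
    rw [← h p.1 ((le_max_left _ _).trans h2) (hGmono ((le_max_right _ _).trans h2) (hrk _))]
    exact hφ p
  have hUc : ∀ k, IsClosed (U k) := by
    intro k
    simp only [U, Set.ofPred_forall]
    exact isClosed_iInter fun p => isClosed_singleton.preimage (continuous_apply p.1)
  have hBc' := isClosed_stage (s := s ∘ N) hBc hUc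
  refine ⟨⋂ k, stage B U (s ∘ N) k, Set.iInter_subset _ 0, ?_, isClosed_iInter hBc',
    fun g φ hφ => Set.mem_iInter.2 fun k => shift_mem_stage hB k g (Set.mem_iInter.1 hφ k), ?_⟩
  · exact IsCompact.nonempty_iInter_of_sequence_nonempty_isCompact_isClosed _
      (fun k φ hφ => hφ.1) (stage_nonempty hBne hBpull hN hdep
        (fun k n hk => hL hk (hs (N k))) fun k => hs' (N k)) (hBc' 0).isCompact hBc'
  · rintro V hV ⟨φ, hφV, hφX⟩
    obtain ⟨E, u, hu, huV⟩ := isOpen_pi_iff.1 hV φ hφV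
    obtain ⟨k, hk⟩ := hc ⟨E, fun p => φ p.1⟩
    have hU : U k = {ψ | ∀ p : E, ψ p = φ p} := by simp only [U]; rw [hk]
    have hUV : U k ⊆ V := by
      intro ψ hψ
      rw [hU] at hψ
      refine huV fun p hp => ?_
      rw [hψ ⟨p, hp⟩]
      exact (hu p hp).2
    refine ⟨N k, fun ψ hψ => ?_⟩
    have h1 := (Set.mem_iInter.1 hψ (k + 1)).2
      ⟨φ, Set.mem_iInter.1 hφX k, by rw [hU]; exact fun _ => rfl⟩ 1
    rw [shift_one, mul_one] at h1
    exact h1.imp (fun h => hUV h) fun h => hUV h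

end Subshift

/-! ### The subshift of pointers and colourings -/

section Base

variable {I : Type}

/-- The alphabets of the subshift: for each finite set `B` of generators a pointer with values in
the letters `i^{±1}`, `i ∈ B` (`true` for the exponent `1`) or `none`, and for each
group element a colour. -/
def Alphabet : Finset I ⊕ FreeGroup I → Type
  | Sum.inl B => Option (B × Bool)
  | Sum.inr _ => Bool

instance (j : Finset I ⊕ FreeGroup I) : Finite (Alphabet j) := by
  cases j
  · exact inferInstanceAs (Finite (Option (_ × Bool)))
  · exact inferInstanceAs (Finite Bool)

instance (j : Finset I ⊕ FreeGroup I) : TopologicalSpace (Alphabet j) := ⊥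

instance (j : Finset I ⊕ FreeGroup I) : DiscreteTopology (Alphabet j) := ⟨rfl⟩

/-- Configurations over the free group with a symbol of every alphabet at each vertex. -/
abbrev Config (I : Type) : Type :=
  ∀ p : (Finset I ⊕ FreeGroup I) × FreeGroup I, Alphabet p.1

/-- The pointer of `φ` for the finite set `B` at the vertex `g`. -/
def pointer (φ : Config I) (B : Finset I) (g : FreeGroup I) : Option (B × Bool) :=
  φ (Sum.inl B, g)

/-- The colour of `φ` for the group element `γ` at the vertex `g`. -/
def colour (φ : Config I) (γ g : FreeGroup I) : Bool :=
  φ (Sum.inr γ, g)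

/-- The configurations in which every edge `g — i g` with `i ∈ B` is followed by the `B`-pointer
at one of its ends, and in which the `γ`-colour changes along each edge `g — γ g`, `γ ≠ 1`. -/
def baseShift (I : Type) : Set (Config I) :=
  {φ | (∀ (B : Finset I) (g : FreeGroup I) (i : B),
      pointer φ B g = some (i, true) ∨ pointer φ B (FreeGroup.of i.1 * g) = some (i, false)) ∧
    ∀ γ : FreeGroup I, γ ≠ 1 → ∀ g, colour φ γ (γ * g) ≠ colour φ γ g}

lemma baseShift_nonempty : (baseShift I).Nonempty := by
  choose d hd using exists_pointer (I := I)
  have hc : ∀ γ : FreeGroup I, ∃ c : FreeGroup I → Bool, γ ≠ 1 → ∀ g, c (γ * g) ≠ c g := by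
    intro γ
    by_cases h : γ = 1
    · exact ⟨fun _ => true, fun h' => absurd h h'⟩
    · obtain ⟨c, hc⟩ := exists_coloring h
      exact ⟨c, fun _ => hc⟩
  choose c hc using hc
  let φ : Config I := fun p => match p with
    | (Sum.inl B, g) => d B g
    | (Sum.inr γ, g) => c γ g
  exact ⟨φ, hd, hc⟩

lemma isClosed_coord (p q : (Finset I ⊕ FreeGroup I) × FreeGroup I)
    (R : Alphabet p.1 → Alphabet q.1 → Prop) : IsClosed {φ : Config I | R (φ p) (φ q)} := by
  have hc : Continuous fun φ : Config I => (φ p, φ q) :=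
    (continuous_apply p).prodMk (continuous_apply q)
  exact (isClosed_discrete {x : Alphabet p.1 × Alphabet q.1 | R x.1 x.2}).preimage hc

lemma isClosed_baseShift : IsClosed (baseShift I) := by
  have h1 : IsClosed {φ : Config I | ∀ (B : Finset I) (g : FreeGroup I) (i : B),
      pointer φ B g = some (i, true) ∨ pointer φ B (FreeGroup.of i.1 * g) = some (i, false)} := by
    simp only [Set.ofPred_forall]
    exact isClosed_iInter fun B => isClosed_iInter fun g => isClosed_iInter fun i =>
      isClosed_coord (Sum.inl B, g) (Sum.inl B, FreeGroup.of i.1 * g)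
        fun a b => a = some (i, true) ∨ b = some (i, false)
  have h2 : IsClosed {φ : Config I | ∀ γ : FreeGroup I, γ ≠ 1 → ∀ g,
      colour φ γ (γ * g) ≠ colour φ γ g} := by
    simp only [Set.ofPred_forall]
    exact isClosed_iInter fun γ => isClosed_iInter fun _ => isClosed_iInter fun g =>
      isClosed_coord (Sum.inr γ, γ * g) (Sum.inr γ, g) fun a b => a ≠ b
  exact h1.inter h2

lemma shift_mem_baseShift (g : FreeGroup I) (φ : Config I) (hφ : φ ∈ baseShift I) :
    shift g φ ∈ baseShift I := by
  refine ⟨fun B h i => ?_, fun γ hγ h => ?_⟩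
  · have := hφ.1 B (h * g) i
    rwa [← mul_assoc] at this
  · have := hφ.2 γ hγ (h * g)
    rwa [← mul_assoc] at this

lemma pointer_pull (l : Finset I ⊕ FreeGroup I → ℕ) (n : ℕ) (π : FreeGroup I → FreeGroup I)
    (φ : Config I) (B : Finset I) (g : FreeGroup I) :
    pointer (pull l n π φ) B g = if l (Sum.inl B) ≤ n then pointer φ B (π g) else pointer φ B g := by
  by_cases h : l (Sum.inl B) ≤ n <;> simp [pointer, pull, h] <;> rfl

lemma colour_pull (l : Finset I ⊕ FreeGroup I → ℕ) (n : ℕ) (π : FreeGroup I → FreeGroup I)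
    (φ : Config I) (γ g : FreeGroup I) :
    colour (pull l n π φ) γ g = if l (Sum.inr γ) ≤ n then colour φ γ (π g) else colour φ γ g := by
  by_cases h : l (Sum.inr γ) ≤ n <;> simp [colour, pull, h] <;> rfl

lemma exists_level {L : ℕ → Set I} (hL : Monotone L) (hLtop : ∀ i, ∃ n, i ∈ L n) :
    ∃ l : Finset I ⊕ FreeGroup I → ℕ, ∀ n π, IsEquivariant (L n) π →
      ∀ φ ∈ baseShift I, pull l n π φ ∈ baseShift I := by
  choose rk hrk using exists_mem_letterGroup hL hLtop
  choose f hf using hLtop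
  refine ⟨Sum.elim (fun B => B.sup f) rk, fun n π hπ φ hφ => ⟨fun B g i => ?_, fun γ hγ g => ?_⟩⟩
  · rw [pointer_pull, pointer_pull]
    split_ifs with h
    · rw [hπ (FreeGroup.of i.1)]
      · exact hφ.1 B _ i
      · exact Subgroup.subset_closure ⟨i.1, hL ((Finset.le_sup i.2).trans h) (hf i.1), rfl⟩
    · exact hφ.1 B g i
  · rw [colour_pull, colour_pull]
    split_ifs with h
    · rw [hπ γ (letterGroup_mono hL h (hrk γ))]
      exact hφ.2 γ hγ _
    · exact hφ.2 γ hγ g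

/-- The letter of the free group coded by a value of a pointer. -/
def letter {B : Finset I} : Option (B × Bool) → FreeGroup I
  | some (i, true) => FreeGroup.of i.1
  | some (i, false) => (FreeGroup.of i.1)⁻¹
  | none => 1

/-- The shift action on an invariant set of configurations. -/
@[reducible] def shiftAction (X : Set (Config I)) (hX : ∀ g, ∀ φ ∈ X, shift g φ ∈ X) :
    MulAction (FreeGroup I) X where
  smul g x := ⟨shift g x.1, hX g x.1 x.2⟩
  one_smul x := Subtype.ext (shift_one x.1)
  mul_smul g h x := Subtype.ext (shift_mul g h x.1)

/-- A free amenable action on a copy of the Cantor space (a subshift of `baseShift I`), for which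
every nonempty open set `V` contains, for some letter of the sequence `s`, the image of its own
complement under that letter. The sets `L n` exhaust the alphabet, and `s n` is fresh for `L n`. -/
theorem exists_action [Countable I] (L : ℕ → Set I) (hL : Monotone L)
    (hLtop : ∀ i, ∃ n, i ∈ L n) (s : ℕ → I) (hs : ∀ n, s n ∈ L (n + 1)) (hs' : ∀ n, s n ∉ L n) :
    ∃ (Y : Type) (_ : TopologicalSpace Y) (_ : MulAction (FreeGroup I) Y),
      ContinuousConstSMul (FreeGroup I) Y ∧ Nonempty (Y ≃ₜ (ℕ → Bool)) ∧
      (∀ g : FreeGroup I, g ≠ 1 → ∀ y : Y, g • y ≠ y) ∧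
      TopologicallyAmenable (fun (g : FreeGroup I) (y : Y) => g • y) ∧
      ∀ V : Set Y, IsOpen V → V.Nonempty → ∃ n, ∀ y, y ∈ V ∨ FreeGroup.of (s n) • y ∈ V := by
  obtain ⟨l, hl⟩ := exists_level hL hLtop
  have : Countable (FreeGroup I) := Quotient.countable
  obtain ⟨X, hXB, hXne, hXc, hXs, hXV⟩ := exists_subshift l L hL hLtop s hs hs'
    baseShift_nonempty isClosed_baseShift shift_mem_baseShift hl
  let _ : MulAction (FreeGroup I) X := shiftAction X hXs
  have hcont : ContinuousConstSMul (FreeGroup I) X :=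
    ⟨fun g => ((continuous_shift g).comp continuous_subtype_val).subtype_mk _⟩
  have hfree : ∀ g : FreeGroup I, g ≠ 1 → ∀ y : X, g • y ≠ y := by
    intro g hg y h
    have h1 := (hXB y.2).2 g hg 1
    have h2 : colour (g • y).1 g 1 = colour y.1 g 1 := by rw [h]
    have h3 : colour (g • y).1 g 1 = colour y.1 g (1 * g) := rfl
    rw [mul_one] at h1
    rw [one_mul] at h3
    exact h1 (h3.symm.trans h2)
  have hmin : ∀ V : Set X, IsOpen V → V.Nonempty →
      ∃ n, ∀ y, y ∈ V ∨ FreeGroup.of (s n) • y ∈ V := by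
    intro V hV ⟨x, hx⟩
    obtain ⟨V', hV', rfl⟩ := isOpen_induced_iff.1 hV
    obtain ⟨n, hn⟩ := hXV V' hV' ⟨x.1, hx, x.2⟩
    exact ⟨n, fun y => hn y.1 y.2⟩
  refine ⟨X, inferInstance, inferInstance, hcont, ?_, hfree, ?_, hmin⟩
  · have : CompactSpace X := isCompact_iff_compactSpace.1 hXc.isCompact
    have : Nonempty X := hXne.to_subtype
    -- the basic clopen sets, given by the value of one coordinate
    have : Nonempty (Σ p : (Finset I ⊕ FreeGroup I) × FreeGroup I, Alphabet p.1) :=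
      ⟨⟨(Sum.inr 1, 1), true⟩⟩
    obtain ⟨c, hc⟩ := exists_surjective_nat
      (Σ p : (Finset I ⊕ FreeGroup I) × FreeGroup I, Alphabet p.1)
    have hsep : ∀ y z : X, (∀ n, y.1 (c n).1 = (c n).2 ↔ z.1 (c n).1 = (c n).2) → y = z := by
      intro y z h
      refine Subtype.ext (funext fun p => ?_)
      obtain ⟨n, hn⟩ := hc ⟨p, y.1 p⟩
      have := h n
      rw [hn] at this
      exact (this.1 rfl).symm
    refine nonempty_homeomorph_cantor (fun n => {y : X | y.1 (c n).1 = (c n).2}) (fun n => ?_)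
      hsep fun C hC ⟨x, hx⟩ => ?_
    · exact (isClopen_discrete {(c n).2}).preimage
        ((continuous_apply (c n).1).comp continuous_subtype_val)
    -- A nonempty clopen set has two points: if it were `{x}`, then for some letter `a`
    -- every point would be `x` or `a⁻¹ • x`, contradicting `a • x ≠ x` and `a • a • x ≠ x`.
    · have hz : ∃ z ∈ C, z ≠ x := by
        by_contra! hall
        obtain ⟨n, hn⟩ := hmin C hC.isOpen ⟨x, hx⟩
        have ha : FreeGroup.of (s n) ≠ 1 := FreeGroup.of_ne_one _
        have haa : FreeGroup.of (s n) * FreeGroup.of (s n) ≠ 1 := by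
          intro h
          rw [← pow_two] at h
          exact ha ((isOfFinOrder_iff_eq_one _).1 (isOfFinOrder_iff_pow_eq_one.2 ⟨2, by simp, h⟩))
        rcases hn (FreeGroup.of (s n) • x) with h | h
        · exact hfree _ ha x (hall _ h)
        · rw [← mul_smul] at h
          exact hfree _ haa x (hall _ h)
      obtain ⟨z, hzC, hzx⟩ := hz
      have hn : ∃ n, ¬ (z.1 (c n).1 = (c n).2 ↔ x.1 (c n).1 = (c n).2) := by
        by_contra! h
        exact hzx (hsep z x h)
      obtain ⟨n, hn⟩ := hn
      refine ⟨n, ?_⟩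
      by_cases h : z.1 (c n).1 = (c n).2
      · have hx' : ¬ x.1 (c n).1 = (c n).2 := fun h' => hn ⟨fun _ => h', fun _ => h⟩
        exact ⟨⟨z, hzC, h⟩, ⟨x, hx, hx'⟩⟩
      · have hx' : x.1 (c n).1 = (c n).2 := by
          by_contra h'
          exact hn ⟨fun h1 => absurd h1 h, fun h1 => absurd h1 h'⟩
        exact ⟨⟨x, hx, hx'⟩, ⟨z, hzC, h⟩⟩
  · refine topologicallyAmenable_of_pointers fun B => ⟨fun y => letter (pointer y.1 B 1), ?_, ?_⟩
    · have h1 : Continuous fun y : X => y.1 (Sum.inl B, 1) :=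
        (continuous_apply (Sum.inl B, 1)).comp continuous_subtype_val
      exact ((IsLocallyConstant.iff_continuous _).2 h1).comp
        (letter : Option (B × Bool) → FreeGroup I)
    · intro i hi y
      have h := (hXB y.2).1 B 1 ⟨i, hi⟩
      have h3 : pointer (FreeGroup.of i • y).1 B 1 = pointer y.1 B (1 * FreeGroup.of i) := rfl
      beta_reduce
      rw [h3, one_mul]
      rw [mul_one] at h
      exact h.imp (fun h => by rw [h]; rfl) fun h => by rw [h]; rfl

end Base

lemma TopologicallyAmenable.conj {Γ Y Z : Type*} [Group Γ] [TopologicalSpace Y]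
    [TopologicalSpace Z] {α : Γ → Y → Y} (h : TopologicallyAmenable α) (e : Y ≃ₜ Z) :
    TopologicallyAmenable fun g z => e (α g (e.symm z)) := by
  intro F ε hε
  obtain ⟨m, h1, h2, h3, h4, h5⟩ := h F ε hε
  refine ⟨fun z => m (e.symm z), fun z => h1 _, fun z => h2 _, fun z => h3 _, fun z δ hδ => ?_,
    fun g hg z => ?_⟩
  · obtain ⟨U, hU, hzU, hU'⟩ := h4 (e.symm z) δ hδ
    exact ⟨e.symm ⁻¹' U, hU.preimage e.symm.continuous, hzU, fun w hw => hU' _ hw⟩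
  · simpa using h5 g hg (e.symm z)

end FreeAmenable

/-- Let `Γ` be the free group on the disjoint union `S ⊔ T` of two disjoint
countably infinite sets and `Γ_S ≤ Γ` the subgroup generated by `S`.  There exists an
action of `Γ` on the Cantor space `X` by homeomorphisms which is free, topologically
amenable, and whose restriction to `Γ_S` is minimal (every `Γ_S`-orbit is dense). -/
theorem exists_free_amenable_action_minimal_on_GammaS
    (S T : Type) [Countable S] [Infinite S] [Countable T] [Infinite T] :
    ∃ α : FreeGroup (S ⊕ T) → (CantorSp ≃ₜ CantorSp),
      (∀ γ γ', α (γ * γ') = (α γ').trans (α γ)) ∧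
      (∀ γ : FreeGroup (S ⊕ T), γ ≠ 1 → ∀ x : CantorSp, (α γ) x ≠ x) ∧
      TopologicallyAmenable (fun γ (x : CantorSp) => (α γ) x) ∧
      (∀ x : CantorSp, Dense {y : CantorSp |
        ∃ γ ∈ Subgroup.closure (Set.range fun s : S => FreeGroup.of (Sum.inl s)),
          (α γ) x = y}) := by
  obtain ⟨hden⟩ := nonempty_denumerable S
  let ν : S ≃ ℕ := Denumerable.eqv S
  -- all letters of `T`, and the first `n` letters of `S`
  let L : ℕ → Set (S ⊕ T) := fun n => {i | ∀ s, i = Sum.inl s → ν s < n}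
  obtain ⟨Y, _, _, _, ⟨e⟩, hfree, ham, hmin⟩ := FreeAmenable.exists_action L
    (fun m n hmn i hi s hs => (hi s hs).trans_le hmn)
    (fun i => by
      cases i with
      | inl s =>
        refine ⟨ν s + 1, fun s' h => ?_⟩
        rw [← Sum.inl.inj h]
        exact Nat.lt_succ_self _
      | inr t => exact ⟨0, fun s' h => by simp at h⟩)
    (fun n => Sum.inl (ν.symm n))
    (fun n s h => by
      rw [← Sum.inl.inj h, Equiv.apply_symm_apply]
      exact Nat.lt_succ_self n)
    (fun n h => by
      have := h _ rfl
      simp at this)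
  refine ⟨fun γ => e.symm.trans ((Homeomorph.smul γ).trans e), fun γ γ' => ?_, fun γ hγ x h => ?_,
    FreeAmenable.TopologicallyAmenable.conj ham e, fun x => ?_⟩
  · ext1 x
    simp [mul_smul]
  · refine hfree γ hγ (e.symm x) (e.injective ?_)
    simpa using h
  · rw [dense_iff_inter_open]
    intro V hV ⟨v, hv⟩
    obtain ⟨n, hn⟩ := hmin (e ⁻¹' V) (hV.preimage e.continuous) ⟨e.symm v, by simpa using hv⟩
    rcases hn (e.symm x) with h | h
    · exact ⟨x, by simpa using h, 1, one_mem _, by simp⟩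
    · exact ⟨_, h, FreeGroup.of (Sum.inl (ν.symm n)), Subgroup.subset_closure ⟨_, rfl⟩, rfl⟩
end
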